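/- (Theorem: minimax lower bound.) Consider the model Y = XA + Z with fixed design X ∈ ℝ^{n×p} and Z having i.i.d. N(0,σ²) entries. Suppose s ≥ 2r and the (2s)-sparse Riesz constants of X satisfy K^{-1} ≤ κ_-(2s) ≤ κ_+(2s) ≤ K for an absolute constant K > 1. Then there exists a constant c > 0 depending only on γ and κ_+(2s) such that for all q ∈ [1,2], inf over all estimators Â (measurable functions of Y) of sup over A ∈ Θ(s,r,d,γ) of E‖Â − A‖_{S_q}² is at least c σ² { (r^{2/q−1} d²/σ²) ∧ [ r^{2/q}(s + m) + r^{2/q−1} s log(ep/s) ] }. -/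

import Mathlib

open MeasureTheory ProbabilityTheory Matrix Set
open scoped ENNReal NNReal

noncomputable section

/-- Euclidean (ℓ₂) norm of a finitely indexed real vector. -/
def l2norm {I : Type*} [Fintype I] (v : I → ℝ) : ℝ := Real.sqrt (∑ i, v i ^ 2)

/-- Frobenius norm of a real matrix. -/
def frobNorm {I J : Type*} [Fintype I] [Fintype J] (M : Matrix I J ℝ) : ℝ :=
  Real.sqrt (∑ i, ∑ j, M i j ^ 2)

/-- ℓ₂/ℓ₁ norm: the sum of the ℓ₂ norms of the rows. -/
def norm21 {I J : Type*} [Fintype I] [Fintype J] (M : Matrix I J ℝ) : ℝ :=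
  ∑ i, l2norm (M i)

open Classical in
/-- Row support: indices of nonzero rows. -/
def rowSupport {I J : Type*} [Fintype I] [Fintype J] (M : Matrix I J ℝ) : Finset I :=
  Finset.univ.filter (fun i => M i ≠ 0)

/-- The j-th largest singular value (j ≥ 1), via the Courant–Fischer max–min
characterization: `σ_j(M) = max_{dim V = j} min_{v ∈ V, ‖v‖=1} ‖Mv‖`. -/
def singularValue {I J : Type*} [Fintype I] [Fintype J] (M : Matrix I J ℝ) (j : ℕ) : ℝ :=
  sSup { t | ∃ V : Submodule ℝ (J → ℝ), Module.finrank ℝ V = j ∧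
    t = sInf { u | ∃ v ∈ V, l2norm v = 1 ∧ u = l2norm (M.mulVec v) } }

/-- Operator norm (largest singular value). -/
def opNorm {I J : Type*} [Fintype I] [Fintype J] (M : Matrix I J ℝ) : ℝ :=
  sSup { t | ∃ v : J → ℝ, l2norm v = 1 ∧ t = l2norm (M.mulVec v) }

/-- Schatten-q norm. -/
def schattenNorm {I J : Type*} [Fintype I] [Fintype J] (M : Matrix I J ℝ) (q : ℝ) : ℝ :=
  (∑ i ∈ Finset.Icc 1 (min (Fintype.card I) (Fintype.card J)), singularValue M i ^ q) ^ (1 / q)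

/-- Squared lower k-sparse Riesz constant `κ₋²(k)`:
the minimum over column subsets B with |B| = k of the smallest eigenvalue of X_B' X_B. -/
def kappaMinusSq {n p : ℕ} (X : Matrix (Fin n) (Fin p) ℝ) (k : ℕ) : ℝ :=
  sInf { t | ∃ B : Finset (Fin p), B.card = k ∧ ∃ v : Fin p → ℝ,
    (∀ i, i ∉ B → v i = 0) ∧ l2norm v = 1 ∧ t = l2norm (X.mulVec v) ^ 2 }

/-- Squared upper k-sparse Riesz constant `κ₊²(k)`. -/
def kappaPlusSq {n p : ℕ} (X : Matrix (Fin n) (Fin p) ℝ) (k : ℕ) : ℝ :=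
  sSup { t | ∃ B : Finset (Fin p), B.card = k ∧ ∃ v : Fin p → ℝ,
    (∀ i, i ∉ B → v i = 0) ∧ l2norm v = 1 ∧ t = l2norm (X.mulVec v) ^ 2 }

def kappaMinus {n p : ℕ} (X : Matrix (Fin n) (Fin p) ℝ) (k : ℕ) : ℝ :=
  Real.sqrt (kappaMinusSq X k)

def kappaPlus {n p : ℕ} (X : Matrix (Fin n) (Fin p) ℝ) (k : ℕ) : ℝ :=
  Real.sqrt (kappaPlusSq X k)

/-- Membership in the parameter space Θ(s, r, d, γ): rank r, all nonzero singular values in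
(d, γd], and at most s nonzero rows. (Singular values are automatically nonincreasing.) -/
def memTheta {p m : ℕ} (A : Matrix (Fin p) (Fin m) ℝ) (s r : ℕ) (d γ : ℝ) : Prop :=
  A.rank = r ∧ 0 < d ∧ singularValue A 1 ≤ γ * d ∧ d < singularValue A r ∧
    (rowSupport A).card ≤ s

/-- `V` is a matrix of top-r right singular vectors of `M`: the columns of `V` are orthonormal
eigenvectors of `MᵀM`, the j-th column with eigenvalue `σ_j(M)²`. -/
def IsRightSingularVectors {I J : Type*} [Fintype I] [Fintype J] {r : ℕ}
    (M : Matrix I J ℝ) (V : Matrix J (Fin r) ℝ) : Prop :=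
  Vᵀ * V = 1 ∧ ∀ j : Fin r,
    (Mᵀ * M).mulVec (fun i => V i j) = (singularValue M (j.1 + 1)) ^ 2 • (fun i => V i j)

/-- `U` is a matrix of top-r left singular vectors of `M`. -/
def IsLeftSingularVectors {I J : Type*} [Fintype I] [Fintype J] {r : ℕ}
    (M : Matrix I J ℝ) (U : Matrix I (Fin r) ℝ) : Prop :=
  IsRightSingularVectors Mᵀ U

instance matrixMeasurableSpace {n m : ℕ} : MeasurableSpace (Matrix (Fin n) (Fin m) ℝ) :=
  (inferInstance : MeasurableSpace (Fin n → Fin m → ℝ))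

/-- Law of an n×m random matrix with i.i.d. N(0, v) entries. -/
def gaussianMatrix (n m : ℕ) (v : ℝ≥0) : Measure (Matrix (Fin n) (Fin m) ℝ) :=
  Measure.pi fun _ : Fin n => Measure.pi fun _ : Fin m => gaussianReal 0 v

open Classical in
/-- Kullback–Leibler divergence D(P‖Q). -/
def klDivM {Ω : Type*} [MeasurableSpace Ω] (P Q : Measure Ω) : ℝ≥0∞ :=
  if P ≪ Q ∧ Integrable (fun x => Real.log (P.rnDeriv Q x).toReal) P
  then ENNReal.ofReal (∫ x, Real.log (P.rnDeriv Q x).toReal ∂P)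
  else ∞

/-- ε-packing number of T with respect to the distance ρ: the maximal cardinality of a subset
of T whose pairwise ρ-distances are all at least ε. -/
def packingNumber {α : Type*} (T : Set α) (ρ : α → α → ℝ) (ε : ℝ) : ℕ :=
  sSup { k | ∃ S : Finset α, ↑S ⊆ T ∧ (∀ x ∈ S, ∀ y ∈ S, x ≠ y → ε ≤ ρ x y) ∧ S.card = k }

/-- Moore–Penrose pseudoinverse (characterized by the four Penrose equations). -/
def IsMoorePenrose {k : ℕ} (M Mi : Matrix (Fin k) (Fin k) ℝ) : Prop :=
  M * Mi * M = M ∧ Mi * M * Mi = Mi ∧ (M * Mi)ᵀ = M * Mi ∧ (Mi * M)ᵀ = Mi * M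

/-! The risk is bounded below on finite families `A₀ + e • F i`. If the laws of `Y` under the
members have `χ²`-divergence at most `exp (L / 2)` from the law under `A₀`, and each `F i` is close
to at most a proportion `exp (-L)` of the family, then by Cauchy–Schwarz every estimator is far from
some member with constant probability. Here `A₀` is a multiple of a fixed partial isometry of rank
`r`, and the perturbations keep rank and row support under control because they are supported on its
row or column space.

Closeness is measured by pairing with certificates `W` that are contractions factoring through `ℝʳ`:
`⟨M, W⟩` is at most the Ky Fan norm `σ₁ + ⋯ + σᵣ`, hence at most `r ^ (1 - 1 / q)` times the
Schatten norm. For the terms `r s` and `r m` the `F i` are random sign matrices, whose differences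
`D` have Schatten-4 norm of the same order as their Frobenius norm, so that `√a (D Dᵀ + a)⁻¹ D` is a
certificate. For the term `s log (e p / s)` the columns of `F i` have disjoint supports and each
consists of one-hot blocks; then differences are themselves multiples of contractions. -/

section ChiSquare

/-- `P` has a density with respect to `Q` whose second moment under `Q` is at most `c`; in other
words, the `χ²`-divergence of `P` from `Q` is at most `c - 1`. -/
def HasChiSqBound {Ω : Type*} [MeasurableSpace Ω] (P Q : Measure Ω) (c : ℝ≥0∞) : Prop :=
  ∃ f : Ω → ℝ≥0∞, Measurable f ∧ P = Q.withDensity f ∧ ∫⁻ x, f x ^ 2 ∂Q ≤ c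

lemma lintegral_pi_prod {ι : Type*} [Fintype ι] {Ω : ι → Type*} [∀ i, MeasurableSpace (Ω i)]
    (μ : ∀ i, Measure (Ω i)) [∀ i, IsProbabilityMeasure (μ i)] {f : ∀ i, Ω i → ℝ≥0∞}
    (hf : ∀ i, Measurable (f i)) :
    ∫⁻ x, ∏ i, f i (x i) ∂(Measure.pi μ) = ∏ i, ∫⁻ x, f i x ∂μ i := by
  rw [lintegral_prod_eq_prod_lintegral_of_indepFun Finset.univ
    (fun i (x : ∀ i, Ω i) => f i (x i)) (iIndepFun_pi fun i => (hf i).aemeasurable)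
    fun i => (hf i).comp (measurable_pi_apply i)]
  exact Finset.prod_congr rfl fun i _ => (measurePreserving_eval μ i).lintegral_comp (hf i)

lemma indicator_univ_pi_prod {ι : Type*} [Fintype ι] {Ω : ι → Type*} {M : Type*}
    [CommMonoidWithZero M] (s : ∀ i, Set (Ω i)) (f : ∀ i, Ω i → M) (x : ∀ i, Ω i) :
    (Set.univ.pi s).indicator (fun x => ∏ i, f i (x i)) x = ∏ i, (s i).indicator (f i) (x i) := by
  by_cases hx : x ∈ Set.univ.pi s
  · rw [Set.indicator_of_mem hx]
    exact Finset.prod_congr rfl fun i _ => (Set.indicator_of_mem (hx i (mem_univ i)) _).symm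
  · obtain ⟨i, hi⟩ : ∃ i, x i ∉ s i := by simpa using hx
    rw [Set.indicator_of_notMem hx,
      Finset.prod_eq_zero (Finset.mem_univ i) (Set.indicator_of_notMem hi _)]

lemma pi_withDensity {ι : Type*} [Fintype ι] {Ω : ι → Type*} [∀ i, MeasurableSpace (Ω i)]
    (μ : ∀ i, Measure (Ω i)) [∀ i, IsProbabilityMeasure (μ i)] {f : ∀ i, Ω i → ℝ≥0∞}
    (hf : ∀ i, Measurable (f i)) [∀ i, SigmaFinite ((μ i).withDensity (f i))] :
    Measure.pi (fun i => (μ i).withDensity (f i)) =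
      (Measure.pi μ).withDensity fun x => ∏ i, f i (x i) := by
  refine Measure.pi_eq fun s hs => ?_
  rw [withDensity_apply _ (.univ_pi hs), ← lintegral_indicator (.univ_pi hs)]
  simp_rw [indicator_univ_pi_prod, lintegral_pi_prod μ fun i => (hf i).indicator (hs i),
    lintegral_indicator (hs _), withDensity_apply _ (hs _)]

namespace HasChiSqBound

lemma pi {ι : Type*} [Fintype ι] {Ω : ι → Type*} [∀ i, MeasurableSpace (Ω i)]
    {P Q : ∀ i, Measure (Ω i)} [∀ i, SigmaFinite (P i)] [∀ i, IsProbabilityMeasure (Q i)]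
    {c : ι → ℝ≥0∞} (h : ∀ i, HasChiSqBound (P i) (Q i) (c i)) :
    HasChiSqBound (Measure.pi P) (Measure.pi Q) (∏ i, c i) := by
  choose f hf hP hc using h
  obtain rfl : P = fun i => (Q i).withDensity (f i) := funext hP
  refine ⟨fun x => ∏ i, f i (x i),
    Finset.measurable_prod _ fun i _ => (hf i).comp (measurable_pi_apply i),
    pi_withDensity Q hf, ?_⟩
  simp_rw [← Finset.prod_pow]
  rw [lintegral_pi_prod Q fun i => (hf i).pow_const 2]
  exact Finset.prod_le_prod' fun i _ => hc i

lemma measure_le {Ω : Type*} [MeasurableSpace Ω] {P Q : Measure Ω} {c : ℝ≥0∞}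
    (h : HasChiSqBound P Q c) {B : Set Ω} (hB : MeasurableSet B) :
    P B ≤ c ^ (1 / 2 : ℝ) * Q B ^ (1 / 2 : ℝ) := by
  obtain ⟨f, hf, rfl, hc⟩ := h
  calc Q.withDensity f B = ∫⁻ x, (f * B.indicator (1 : Ω → ℝ≥0∞)) x ∂Q := by
        rw [withDensity_apply _ hB, ← lintegral_indicator hB]
        congr 1 with x
        by_cases hx : x ∈ B <;> simp [hx]
    _ ≤ (∫⁻ x, f x ^ (2 : ℝ) ∂Q) ^ (1 / 2 : ℝ) *
          (∫⁻ x, B.indicator 1 x ^ (2 : ℝ) ∂Q) ^ (1 / 2 : ℝ) :=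
        ENNReal.lintegral_mul_le_Lp_mul_Lq Q Real.HolderConjugate.two_two hf.aemeasurable
          (measurable_one.indicator hB).aemeasurable
    _ ≤ c ^ (1 / 2 : ℝ) * Q B ^ (1 / 2 : ℝ) := by
        have hB2 : ∫⁻ x, B.indicator (1 : Ω → ℝ≥0∞) x ^ (2 : ℝ) ∂Q = Q B := by
          rw [← lintegral_indicator_one hB]
          congr 1 with x
          by_cases hx : x ∈ B <;> simp [hx]
        rw [hB2]
        gcongr
        simpa using hc

end HasChiSqBound

open Classical in
lemma exists_measure_le_of_card_le {Ω ι : Type*} [MeasurableSpace Ω] [Fintype ι] [Nonempty ι]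
    (Q : Measure Ω) [IsProbabilityMeasure Q] {B : ι → Set Ω} (hB : ∀ i, MeasurableSet (B i))
    {t : ℝ≥0∞} (h : ∀ ω, (Finset.univ.filter fun i => ω ∈ B i).card ≤ Fintype.card ι * t) :
    ∃ i, Q (B i) ≤ t := by
  have hsum : ∑ i, Q (B i) ≤ ∑ _i : ι, t := by
    calc ∑ i, Q (B i) = ∫⁻ ω, ∑ i, (B i).indicator 1 ω ∂Q := by
          rw [lintegral_finsetSum _ fun i _ => measurable_one.indicator (hB i)]
          exact Finset.sum_congr rfl fun i _ => (lintegral_indicator_one (hB i)).symm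
      _ = ∫⁻ ω, (Finset.univ.filter fun i => ω ∈ B i).card ∂Q := by
          simp only [Finset.natCast_card_filter, Set.indicator_apply, Pi.one_apply]
      _ ≤ ∫⁻ _, Fintype.card ι * t ∂Q := lintegral_mono h
      _ = ∑ _i : ι, t := by simp
  obtain ⟨i, -, hi⟩ := ENNReal.exists_le_of_sum_le Finset.univ_nonempty hsum
  exact ⟨i, hi⟩

open Classical in
/-- A second-moment substitute for Fano's inequality: the `χ²` bounds turn the average of the
`Q (B i)`, at most `exp (-L)` by counting, into a bound on some `P i (B i)`. -/
lemma exists_measure_le_exp_of_hasChiSqBound {Ω ι : Type*} [MeasurableSpace Ω] [Fintype ι]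
    [Nonempty ι] {P : ι → Measure Ω} {Q : Measure Ω} [IsProbabilityMeasure Q] {L : ℝ}
    (hPQ : ∀ i, HasChiSqBound (P i) Q (ENNReal.ofReal (Real.exp (L / 2))))
    {B : ι → Set Ω} (hB : ∀ i, MeasurableSet (B i))
    (hcard : ∀ ω, (Finset.univ.filter fun i => ω ∈ B i).card * Real.exp L ≤ Fintype.card ι) :
    ∃ i, P i (B i) ≤ ENNReal.ofReal (Real.exp (-L / 4)) := by
  obtain ⟨i, hi⟩ := exists_measure_le_of_card_le Q hB (t := ENNReal.ofReal (Real.exp (-L)))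
    fun ω => by
      rw [← ENNReal.ofReal_natCast, ← ENNReal.ofReal_natCast (Fintype.card ι),
        ← ENNReal.ofReal_mul (Nat.cast_nonneg _), Real.exp_neg, ← div_eq_mul_inv]
      exact ENNReal.ofReal_le_ofReal ((le_div_iff₀ (Real.exp_pos L)).2 (hcard ω))
  refine ⟨i, ?_⟩
  calc P i (B i) ≤ ENNReal.ofReal (Real.exp (L / 2)) ^ (1 / 2 : ℝ) * Q (B i) ^ (1 / 2 : ℝ) :=
        (hPQ i).measure_le (hB i)
    _ ≤ ENNReal.ofReal (Real.exp (L / 2)) ^ (1 / 2 : ℝ) *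
          ENNReal.ofReal (Real.exp (-L)) ^ (1 / 2 : ℝ) := by gcongr
    _ = ENNReal.ofReal (Real.exp (-L / 4)) := by
        rw [ENNReal.ofReal_rpow_of_pos (Real.exp_pos _),
          ENNReal.ofReal_rpow_of_pos (Real.exp_pos _), ← ENNReal.ofReal_mul (by positivity),
          ← Real.exp_mul, ← Real.exp_mul, ← Real.exp_add]
        ring_nf

end ChiSquare

section Gaussian

lemma gaussianPDFReal_mul_exp (a b x : ℝ) {v : ℝ≥0} (hv : v ≠ 0) :
    gaussianPDFReal b v x * Real.exp ((a - b) * (2 * x - a - b) / (2 * v)) =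
      gaussianPDFReal a v x := by
  simp only [gaussianPDFReal]
  rw [mul_assoc, ← Real.exp_add]
  congr 2
  field_simp
  ring

lemma hasChiSqBound_gaussianReal (a b : ℝ) {v : ℝ≥0} (hv : v ≠ 0) :
    HasChiSqBound (gaussianReal a v) (gaussianReal b v)
      (ENNReal.ofReal (Real.exp ((a - b) ^ 2 / v))) := by
  set f : ℝ → ℝ := fun x => Real.exp ((a - b) * (2 * x - a - b) / (2 * v)) with hf
  have hfm : Measurable fun x => ENNReal.ofReal (f x) := by fun_prop
  refine ⟨_, hfm, ?_, ?_⟩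
  · rw [gaussianReal_of_var_ne_zero _ hv, gaussianReal_of_var_ne_zero _ hv,
      ← withDensity_mul _ (measurable_gaussianPDF _ _) hfm]
    congr 1 with x
    simp only [Pi.mul_apply, gaussianPDF, ← ENNReal.ofReal_mul (gaussianPDFReal_nonneg b v x), hf,
      gaussianPDFReal_mul_exp a b x hv]
  -- Tilting once moves the mean from `b` to `a`, tilting twice moves it on to `2 * a - b`.
  · have htilt (x : ℝ) : gaussianPDFReal b v x * f x ^ 2 =
        Real.exp ((a - b) ^ 2 / v) * gaussianPDFReal (2 * a - b) v x := by
      rw [sq, ← mul_assoc, hf, gaussianPDFReal_mul_exp a b x hv,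
        ← gaussianPDFReal_mul_exp (2 * a - b) a x hv, mul_left_comm, ← Real.exp_add]
      congr 2
      field_simp
      ring_nf
    refine le_of_eq ?_
    calc ∫⁻ x, ENNReal.ofReal (f x) ^ 2 ∂gaussianReal b v
        = ∫⁻ x, gaussianPDF b v x * ENNReal.ofReal (f x) ^ 2 := by
          rw [gaussianReal_of_var_ne_zero _ hv, lintegral_withDensity_eq_lintegral_mul _
            (measurable_gaussianPDF _ _) (hfm.pow_const 2)]
          rfl
      _ = ∫⁻ x, ENNReal.ofReal (Real.exp ((a - b) ^ 2 / v)) * gaussianPDF (2 * a - b) v x := by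
          congr 1 with x
          rw [gaussianPDF, gaussianPDF, ← ENNReal.ofReal_pow (by positivity),
            ← ENNReal.ofReal_mul (gaussianPDFReal_nonneg _ _ _), htilt,
            ENNReal.ofReal_mul (by positivity)]
      _ = ENNReal.ofReal (Real.exp ((a - b) ^ 2 / v)) := by
          rw [lintegral_const_mul _ (measurable_gaussianPDF _ _),
            lintegral_gaussianPDF_eq_one _ hv, mul_one]

variable {n m : ℕ}

lemma gaussianMatrix_map_add_left (v : ℝ≥0) (θ : Matrix (Fin n) (Fin m) ℝ) :
    (gaussianMatrix n m v).map (fun Z => θ + Z) =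
      Measure.pi fun i => Measure.pi fun j => gaussianReal (θ i j) v := by
  have hrow (i : Fin n) : (Measure.pi fun _ : Fin m => gaussianReal 0 v).map
      (fun z j => θ i j + z j) = Measure.pi fun j => gaussianReal (θ i j) v := by
    have hent (j : Fin m) : (gaussianReal 0 v).map (fun x => θ i j + x) =
        gaussianReal (θ i j) v := by
      rw [gaussianReal_map_const_add, zero_add]
    rw [Measure.pi_map_pi (f := fun j x => θ i j + x)
      (hμ := fun j => by rw [hent]; infer_instance) fun j => by fun_prop]
    simp_rw [hent]
  refine (Measure.pi_map_pi (f := fun i (z : Fin m → ℝ) j => θ i j + z j)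
    (hμ := fun i => by rw [hrow]; infer_instance) fun i =>
      (measurable_pi_lambda _ fun j => (measurable_pi_apply j).const_add _).aemeasurable).trans ?_
  simp_rw [hrow]

instance isProbabilityMeasure_gaussianMatrix_map_add_left (v : ℝ≥0)
    (θ : Matrix (Fin n) (Fin m) ℝ) :
    IsProbabilityMeasure ((gaussianMatrix n m v).map fun Z => θ + Z) := by
  rw [gaussianMatrix_map_add_left]
  have hrow (i : Fin n) : IsProbabilityMeasure
    (Measure.pi fun j : Fin m => gaussianReal (θ i j) v) := inferInstance
  exact Measure.pi.instIsProbabilityMeasure _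

lemma hasChiSqBound_gaussianMatrix {v : ℝ≥0} (hv : v ≠ 0) (θ θ₀ : Matrix (Fin n) (Fin m) ℝ) :
    HasChiSqBound ((gaussianMatrix n m v).map fun Z => θ + Z)
      ((gaussianMatrix n m v).map fun Z => θ₀ + Z)
      (ENNReal.ofReal (Real.exp (frobNorm (θ - θ₀) ^ 2 / v))) := by
  have hprod : ENNReal.ofReal (Real.exp (frobNorm (θ - θ₀) ^ 2 / v)) =
      ∏ i, ∏ j, ENNReal.ofReal (Real.exp ((θ i j - θ₀ i j) ^ 2 / v)) := by
    rw [frobNorm, Real.sq_sqrt (by positivity)]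
    simp only [Finset.sum_div, Real.exp_sum, Matrix.sub_apply]
    rw [ENNReal.ofReal_prod_of_nonneg fun _ _ => by positivity]
    exact Finset.prod_congr rfl fun i _ => ENNReal.ofReal_prod_of_nonneg fun _ _ => by positivity
  rw [gaussianMatrix_map_add_left, gaussianMatrix_map_add_left, hprod]
  have hrow (θ : Matrix (Fin n) (Fin m) ℝ) (i : Fin n) : IsProbabilityMeasure
    (Measure.pi fun j => gaussianReal (θ i j) v) := inferInstance
  have := hrow θ
  have := hrow θ₀
  exact .pi fun i => .pi fun j => hasChiSqBound_gaussianReal _ _ hv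

end Gaussian

section EuclideanNorm

variable {I J K : Type*} [Fintype I] [Fintype J] [Fintype K]

lemma l2norm_eq_norm (v : I → ℝ) : l2norm v = ‖(WithLp.toLp 2 v : EuclideanSpace ℝ I)‖ := by
  simp [EuclideanSpace.norm_eq, l2norm]

lemma l2norm_nonneg (v : I → ℝ) : 0 ≤ l2norm v := Real.sqrt_nonneg _

lemma l2norm_sq (v : I → ℝ) : l2norm v ^ 2 = v ⬝ᵥ v := by
  rw [l2norm, Real.sq_sqrt (by positivity)]
  simp [dotProduct, sq]

lemma l2norm_zero : l2norm (0 : I → ℝ) = 0 := by simp [l2norm]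

lemma l2norm_pos {v : I → ℝ} (h : v ≠ 0) : 0 < l2norm v := by
  simpa [l2norm_eq_norm, norm_pos_iff] using h

lemma l2norm_smul (a : ℝ) (v : I → ℝ) : l2norm (a • v) = |a| * l2norm v := by
  rw [l2norm_eq_norm, l2norm_eq_norm, WithLp.toLp_smul, norm_smul, Real.norm_eq_abs]

lemma l2norm_add_le (v w : I → ℝ) : l2norm (v + w) ≤ l2norm v + l2norm w := by
  simpa only [l2norm_eq_norm, WithLp.toLp_add] using norm_add_le _ _

lemma dotProduct_le_l2norm_mul_l2norm (v w : I → ℝ) : v ⬝ᵥ w ≤ l2norm v * l2norm w :=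
  Real.sum_mul_le_sqrt_mul_sqrt _ _ _

lemma frobNorm_nonneg (M : Matrix I J ℝ) : 0 ≤ frobNorm M := Real.sqrt_nonneg _

lemma frobNorm_sq (M : Matrix I J ℝ) : frobNorm M ^ 2 = ∑ i, ∑ j, M i j ^ 2 :=
  Real.sq_sqrt (by positivity)

lemma frobNorm_sq_eq_sum_l2norm_sq (M : Matrix I J ℝ) :
    frobNorm M ^ 2 = ∑ j, l2norm (Mᵀ j) ^ 2 := by
  simp only [frobNorm_sq, l2norm_sq, dotProduct, Matrix.transpose_apply, ← sq]
  exact Finset.sum_comm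

lemma frobNorm_smul (a : ℝ) (M : Matrix I J ℝ) : frobNorm (a • M) = |a| * frobNorm M := by
  refine (sq_eq_sq₀ (frobNorm_nonneg _) (mul_nonneg (abs_nonneg a) (frobNorm_nonneg M))).1 ?_
  simp only [mul_pow, sq_abs, frobNorm_sq, Matrix.smul_apply, smul_eq_mul, Finset.mul_sum]

lemma l2norm_mulVec_le (M : Matrix I J ℝ) (v : J → ℝ) :
    l2norm (M *ᵥ v) ≤ frobNorm M * l2norm v := by
  refine le_of_sq_le_sq ?_ (mul_nonneg (frobNorm_nonneg _) (l2norm_nonneg _))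
  rw [mul_pow, frobNorm_sq, Finset.sum_mul]
  simp only [l2norm_sq, dotProduct, ← sq]
  exact Finset.sum_le_sum fun i _ => Finset.sum_mul_sq_le_sq_mul_sq _ _ _

end EuclideanNorm

section FrobeniusInner

variable {I J K : Type*} [Fintype I] [Fintype J] [Fintype K]

/-- The Frobenius (trace) inner product `⟨M, N⟩ = tr (M Nᵀ)` of real matrices. -/
def frobInner : LinearMap.BilinForm ℝ (Matrix I J ℝ) :=
  LinearMap.mk₂ ℝ (fun M N => (M * Nᵀ).trace)
    (fun M M' N => by rw [Matrix.add_mul, Matrix.trace_add])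
    (fun a M N => by rw [Matrix.smul_mul, Matrix.trace_smul])
    (fun M N N' => by rw [Matrix.transpose_add, Matrix.mul_add, Matrix.trace_add])
    (fun a M N => by rw [Matrix.transpose_smul, Matrix.mul_smul, Matrix.trace_smul])

lemma frobInner_apply (M N : Matrix I J ℝ) : frobInner M N = (M * Nᵀ).trace := rfl

lemma frobInner_eq_sum (M N : Matrix I J ℝ) : frobInner M N = ∑ i, ∑ j, M i j * N i j := by
  simp [frobInner_apply, Matrix.trace, Matrix.mul_apply]

lemma frobInner_comm (M N : Matrix I J ℝ) : frobInner M N = frobInner N M := by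
  simp only [frobInner_eq_sum, mul_comm]

lemma frobInner_smul_smul (a b : ℝ) (M N : Matrix I J ℝ) :
    frobInner (a • M) (b • N) = a * b * frobInner M N := by
  rw [LinearMap.map_smul₂, map_smul, smul_eq_mul, smul_eq_mul, mul_assoc]

lemma frobInner_transpose (M N : Matrix I J ℝ) : frobInner Mᵀ Nᵀ = frobInner M N := by
  rw [frobInner_comm, frobInner_apply, frobInner_apply, Matrix.transpose_transpose,
    Matrix.trace_mul_comm]

lemma frobInner_mul_left (A : Matrix I K ℝ) (M : Matrix K J ℝ) (N : Matrix I J ℝ) :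
    frobInner (A * M) N = frobInner M (Aᵀ * N) := by
  rw [frobInner_apply, frobInner_apply, Matrix.transpose_mul, Matrix.transpose_transpose,
    Matrix.mul_assoc, Matrix.trace_mul_comm, Matrix.mul_assoc]

lemma frobInner_mul_right (M : Matrix I K ℝ) (B : Matrix K J ℝ) (N : Matrix I J ℝ) :
    frobInner (M * B) N = frobInner M (N * Bᵀ) := by
  rw [frobInner_apply, frobInner_apply, Matrix.transpose_mul, Matrix.transpose_transpose,
    Matrix.mul_assoc]

lemma frobInner_mul_transpose_mul_transpose (M : Matrix I K ℝ) (N : Matrix I J ℝ) :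
    frobInner (M * Mᵀ) (N * Nᵀ) = frobInner (Nᵀ * M) (Nᵀ * M) := by
  rw [frobInner_mul_right, Matrix.transpose_transpose, Matrix.mul_assoc, frobInner_comm,
    frobInner_mul_left]

lemma frobNorm_sq_eq_frobInner (M : Matrix I J ℝ) : frobNorm M ^ 2 = frobInner M M := by
  rw [frobNorm_sq, frobInner_eq_sum]
  simp only [sq]

lemma frobInner_self_nonneg (M : Matrix I J ℝ) : 0 ≤ frobInner M M :=
  frobNorm_sq_eq_frobInner M ▸ sq_nonneg _

end FrobeniusInner

section Contraction

variable {I J K : Type*} [Fintype I] [Fintype J] [Fintype K]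

/-- The matrix `M` has operator norm at most one. -/
def IsContraction (M : Matrix I J ℝ) : Prop := ∀ v, l2norm (M *ᵥ v) ≤ l2norm v

lemma isContraction_of_frobNorm_le_one {M : Matrix I J ℝ} (h : frobNorm M ≤ 1) :
    IsContraction M := fun v =>
  (l2norm_mulVec_le M v).trans (mul_le_of_le_one_left (l2norm_nonneg v) h)

lemma l2norm_mulVec_of_transpose_mul_self [DecidableEq J] {U : Matrix I J ℝ} (hU : Uᵀ * U = 1)
    (v : J → ℝ) : l2norm (U *ᵥ v) = l2norm v := by
  refine (sq_eq_sq₀ (l2norm_nonneg _) (l2norm_nonneg _)).1 ?_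
  rw [l2norm_sq, l2norm_sq, Matrix.dotProduct_mulVec, ← Matrix.mulVec_transpose,
    Matrix.mulVec_mulVec, hU, Matrix.one_mulVec]

lemma isContraction_of_transpose_mul_self [DecidableEq J] {U : Matrix I J ℝ}
    (hU : Uᵀ * U = 1) : IsContraction U := fun v =>
  (l2norm_mulVec_of_transpose_mul_self hU v).le

namespace IsContraction

lemma mul {M : Matrix I J ℝ} {N : Matrix J K ℝ} (hM : IsContraction M) (hN : IsContraction N) :
    IsContraction (M * N) := fun v => by
  rw [← Matrix.mulVec_mulVec]
  exact (hM _).trans (hN v)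

lemma neg {M : Matrix I J ℝ} (hM : IsContraction M) : IsContraction (-M) := fun v => by
  have h := l2norm_smul (-1) (M *ᵥ v)
  rw [neg_one_smul, abs_neg, abs_one, one_mul] at h
  rw [Matrix.neg_mulVec, h]
  exact hM v

lemma transpose {M : Matrix I J ℝ} (hM : IsContraction M) : IsContraction Mᵀ := fun z => by
  have hsq : l2norm (Mᵀ *ᵥ z) ^ 2 ≤ l2norm z * l2norm (Mᵀ *ᵥ z) := calc
    l2norm (Mᵀ *ᵥ z) ^ 2 = z ⬝ᵥ M *ᵥ (Mᵀ *ᵥ z) := by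
        rw [l2norm_sq, Matrix.dotProduct_mulVec z, ← Matrix.mulVec_transpose]
    _ ≤ l2norm z * l2norm (M *ᵥ (Mᵀ *ᵥ z)) := dotProduct_le_l2norm_mul_l2norm _ _
    _ ≤ l2norm z * l2norm (Mᵀ *ᵥ z) :=
        mul_le_mul_of_nonneg_left (hM _) (l2norm_nonneg z)
  by_contra! hlt
  nlinarith [l2norm_nonneg z]

end IsContraction

end Contraction

section SingularValue

variable {I J K : Type*} [Fintype I] [Fintype J] [Fintype K]

lemma singularValue_nonneg (M : Matrix I J ℝ) (j : ℕ) : 0 ≤ singularValue M j := by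
  refine Real.sSup_nonneg ?_
  rintro _ ⟨V, -, rfl⟩
  refine Real.sInf_nonneg ?_
  rintro _ ⟨v, -, -, rfl⟩
  exact l2norm_nonneg _

lemma l2norm_inv_smul_self {v : J → ℝ} (hv : v ≠ 0) : l2norm ((l2norm v)⁻¹ • v) = 1 := by
  rw [l2norm_smul, abs_of_pos (inv_pos.2 (l2norm_pos hv)), inv_mul_cancel₀ (l2norm_pos hv).ne']

lemma sInf_l2norm_mulVec_mul_le (M : Matrix I J ℝ) {V : Submodule ℝ (J → ℝ)} {v : J → ℝ}
    (hv : v ∈ V) :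
    sInf {u | ∃ v ∈ V, l2norm v = 1 ∧ u = l2norm (M *ᵥ v)} * l2norm v ≤ l2norm (M *ᵥ v) := by
  rcases eq_or_ne v 0 with rfl | hv0
  · simp [l2norm_zero]
  have hbdd : BddBelow {u | ∃ v ∈ V, l2norm v = 1 ∧ u = l2norm (M *ᵥ v)} := by
    refine ⟨0, ?_⟩
    rintro _ ⟨v, -, -, rfl⟩
    exact l2norm_nonneg _
  have h := csInf_le hbdd ⟨_, V.smul_mem _ hv, l2norm_inv_smul_self hv0, rfl⟩
  rwa [Matrix.mulVec_smul, l2norm_smul, abs_of_pos (inv_pos.2 (l2norm_pos hv0)),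
    le_inv_mul_iff₀ (l2norm_pos hv0), mul_comm] at h

lemma sInf_l2norm_mulVec_le_of_forall_le {M : Matrix I J ℝ} {t : ℝ} (ht : 0 ≤ t)
    (h : ∀ v, l2norm (M *ᵥ v) ≤ t * l2norm v) (V : Submodule ℝ (J → ℝ)) :
    sInf {u | ∃ v ∈ V, l2norm v = 1 ∧ u = l2norm (M *ᵥ v)} ≤ t := by
  rcases Set.eq_empty_or_nonempty {u | ∃ v ∈ V, l2norm v = 1 ∧ u = l2norm (M *ᵥ v)} with
    hempty | ⟨_, v, hv, hv1, rfl⟩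
  · rwa [hempty, Real.sInf_empty]
  · have hle := (sInf_l2norm_mulVec_mul_le M hv).trans (h v)
    rwa [hv1, mul_one, mul_one] at hle

lemma singularValue_le {M : Matrix I J ℝ} {t : ℝ} (ht : 0 ≤ t)
    (h : ∀ v, l2norm (M *ᵥ v) ≤ t * l2norm v) (j : ℕ) : singularValue M j ≤ t := by
  refine Real.sSup_le ?_ ht
  rintro _ ⟨V, -, rfl⟩
  exact sInf_l2norm_mulVec_le_of_forall_le ht h V

lemma le_singularValue {M : Matrix I J ℝ} {t : ℝ} {V : Submodule ℝ (J → ℝ)} (hV : V ≠ ⊥)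
    (h : ∀ v ∈ V, t * l2norm v ≤ l2norm (M *ᵥ v)) :
    t ≤ singularValue M (Module.finrank ℝ V) := by
  refine le_trans (le_csInf ?_ ?_) (le_csSup ⟨frobNorm M, ?_⟩ ⟨V, rfl, rfl⟩)
  · obtain ⟨v, hv, hv0⟩ := V.exists_mem_ne_zero_of_ne_bot hV
    exact ⟨_, _, V.smul_mem _ hv, l2norm_inv_smul_self hv0, rfl⟩
  · rintro _ ⟨v, hv, hv1, rfl⟩
    simpa only [hv1, mul_one] using h v hv
  · rintro _ ⟨W, -, rfl⟩
    exact sInf_l2norm_mulVec_le_of_forall_le (frobNorm_nonneg M) (l2norm_mulVec_le M) W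

lemma exists_submodule_of_lt_singularValue {M : Matrix I J ℝ} {t : ℝ} {j : ℕ} (ht : 0 ≤ t)
    (h : t < singularValue M j) :
    ∃ V : Submodule ℝ (J → ℝ), V ≠ ⊥ ∧ Module.finrank ℝ V = j ∧
      ∀ v ∈ V, t * l2norm v ≤ l2norm (M *ᵥ v) := by
  have hne : {t | ∃ V : Submodule ℝ (J → ℝ), Module.finrank ℝ V = j ∧
      t = sInf {u | ∃ v ∈ V, l2norm v = 1 ∧ u = l2norm (M *ᵥ v)}}.Nonempty := by
    by_contra hempty
    rw [Set.not_nonempty_iff_eq_empty] at hempty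
    rw [singularValue, hempty, Real.sSup_empty] at h
    exact h.not_ge ht
  obtain ⟨_, ⟨V, hVj, rfl⟩, hlt⟩ := exists_lt_of_lt_csSup hne h
  refine ⟨V, ?_, hVj, fun v hv => (mul_le_mul_of_nonneg_right hlt.le (l2norm_nonneg v)).trans
    (sInf_l2norm_mulVec_mul_le M hv)⟩
  rintro rfl
  refine hlt.not_ge (le_of_eq_of_le ?_ ht)
  simp [l2norm_zero]

lemma singularValue_mul_le_right {X : Matrix I J ℝ} (hX : IsContraction X) (M : Matrix J K ℝ)
    (j : ℕ) : singularValue (X * M) j ≤ singularValue M j := by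
  refine le_of_forall_gt_imp_ge_of_dense fun t ht => ?_
  by_contra! hlt
  obtain ⟨V, hV, rfl, h⟩ :=
    exists_submodule_of_lt_singularValue ((singularValue_nonneg M j).trans ht.le) hlt
  refine ht.not_ge (le_singularValue hV fun v hv => (h v hv).trans ?_)
  rw [← Matrix.mulVec_mulVec]
  exact hX _

lemma singularValue_mul_le_left (M : Matrix I J ℝ) {Y : Matrix J K ℝ} (hY : IsContraction Y)
    (j : ℕ) : singularValue (M * Y) j ≤ singularValue M j := by
  refine le_of_forall_gt_imp_ge_of_dense fun t ht => ?_
  by_contra! hlt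
  have ht0 : 0 < t := (singularValue_nonneg M j).trans_lt ht
  obtain ⟨V, hV, rfl, h⟩ := exists_submodule_of_lt_singularValue ht0.le hlt
  have hinj : Function.Injective (Y.mulVecLin.domRestrict V) := by
    rw [← LinearMap.ker_eq_bot, LinearMap.ker_eq_bot']
    intro v hv
    have hYv : Y *ᵥ (v : K → ℝ) = 0 := hv
    have hle := h v v.2
    rw [← Matrix.mulVec_mulVec, hYv, Matrix.mulVec_zero, l2norm_zero] at hle
    by_contra hv0
    exact hle.not_gt (mul_pos ht0 (l2norm_pos (by simpa using hv0)))
  rw [← LinearMap.finrank_range_of_inj hinj] at ht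
  refine ht.not_ge (le_singularValue ?_ ?_)
  · rwa [Ne, ← Submodule.finrank_eq_zero, LinearMap.finrank_range_of_inj hinj,
      Submodule.finrank_eq_zero]
  · rintro _ ⟨v, rfl⟩
    refine (mul_le_mul_of_nonneg_left (hY v) ht0.le).trans ((h v v.2).trans_eq ?_)
    rw [← Matrix.mulVec_mulVec]
    rfl

end SingularValue

section KyFan

lemma exists_orthonormalBasis_norm_mul_le {E F : Type*} [NormedAddCommGroup E]
    [InnerProductSpace ℝ E] [FiniteDimensional ℝ E] [NormedAddCommGroup F]
    [InnerProductSpace ℝ F] [FiniteDimensional ℝ F] {k : ℕ} (hk : Module.finrank ℝ E = k)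
    (T : E →ₗ[ℝ] F) :
    ∃ b : OrthonormalBasis (Fin k) ℝ E, ∀ i, ∀ w ∈ Submodule.span ℝ (b '' Set.Iic i),
      ‖T (b i)‖ * ‖w‖ ≤ ‖T w‖ := by
  have hS := LinearMap.isSymmetric_adjoint_comp_self T
  set b := hS.eigenvectorBasis hk
  set μ := hS.eigenvalues hk
  have hnorm (w : E) : ‖T w‖ ^ 2 = ∑ j, μ j * inner ℝ (b j) w ^ 2 := by
    rw [← real_inner_self_eq_norm_sq, ← LinearMap.adjoint_inner_right, ← LinearMap.comp_apply,
      ← b.sum_inner_mul_inner]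
    refine Finset.sum_congr rfl fun j _ => ?_
    rw [← hS (b j) w, hS.apply_eigenvectorBasis hk j, inner_smul_left, real_inner_comm]
    simp only [RCLike.ofReal_real_eq_id, id_eq, conj_trivial]
    ring
  refine ⟨b, fun i w hw => le_of_sq_le_sq ?_ (norm_nonneg _)⟩
  have hTb : ‖T (b i)‖ ^ 2 = μ i := by
    rw [hnorm, Finset.sum_eq_single i (fun j _ hj => by simp [b.inner_eq_zero hj]) (by simp)]
    simp
  have horth (j : Fin k) (hj : i < j) : inner ℝ (b j) w = 0 := by
    have hle : Submodule.span ℝ (b '' Set.Iic i) ≤ LinearMap.ker (innerₛₗ ℝ (b j)) := by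
      rw [Submodule.span_le]
      rintro _ ⟨l, hl, rfl⟩
      simpa using b.inner_eq_zero (hl.trans_lt hj).ne'
    simpa using hle hw
  rw [mul_pow, hTb, hnorm w, ← b.sum_sq_norm_inner_right w, Finset.mul_sum]
  refine Finset.sum_le_sum fun j _ => ?_
  rw [Real.norm_eq_abs, sq_abs]
  rcases lt_or_ge i j with hj | hj
  · simp [horth j hj]
  · exact mul_le_mul_of_nonneg_right (hS.eigenvalues_antitone hk hj) (sq_nonneg _)

lemma sum_Icc_one_eq_sum_fin {M : Type*} [AddCommMonoid M] (f : ℕ → M) (k : ℕ) :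
    ∑ i ∈ Finset.Icc 1 k, f i = ∑ i : Fin k, f (i + 1) := by
  rw [Fin.sum_univ_eq_sum_range fun i => f (i + 1), Finset.range_eq_Ico,
    Finset.sum_Ico_add' f 0 k 1]
  rfl

/-- Ky Fan's inequality for the identity: each Rayleigh quotient in an eigenbasis of `NᵀN` is at
most the corresponding singular value. -/
lemma trace_le_sum_singularValue {k : ℕ} (N : Matrix (Fin k) (Fin k) ℝ) :
    N.trace ≤ ∑ i ∈ Finset.Icc 1 k, singularValue N i := by
  set T := Matrix.toEuclideanLin N with hT
  obtain ⟨b, hb⟩ := exists_orthonormalBasis_norm_mul_le finrank_euclideanSpace_fin T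
  have hle (i : Fin k) : ‖T (b i)‖ ≤ singularValue N (i + 1) := by
    have hW : Module.finrank ℝ ((Submodule.span ℝ (b '' Set.Iic i)).map
        (WithLp.linearEquiv 2 ℝ (Fin k → ℝ)).toLinearMap) = i + 1 := by
      have hli : LinearIndependent ℝ fun j : Set.Iic i => b j :=
        b.orthonormal.linearIndependent.comp _ Subtype.val_injective
      rw [LinearEquiv.finrank_map_eq, Set.image_eq_range, finrank_span_eq_card hli]
      simp
    rw [← hW]
    refine le_singularValue ?_ ?_
    · rw [Ne, ← Submodule.finrank_eq_zero, hW]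
      exact Nat.succ_ne_zero _
    · rintro _ ⟨w, hw, rfl⟩
      rw [l2norm_eq_norm, l2norm_eq_norm]
      exact hb i w hw
  calc N.trace = ∑ i, inner ℝ (b i) (T (b i)) := by
        rw [← LinearMap.trace_eq_sum_inner T b, hT, Matrix.toEuclideanLin_eq_toLin_orthonormal,
          Matrix.trace_toLin_eq]
    _ ≤ ∑ i : Fin k, singularValue N (i + 1) := by
        refine Finset.sum_le_sum fun i _ => (real_inner_le_norm _ _).trans ?_
        rw [b.norm_eq_one, one_mul]
        exact hle i
    _ = ∑ i ∈ Finset.Icc 1 k, singularValue N i := (sum_Icc_one_eq_sum_fin _ k).symm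

variable {I J : Type*} [Fintype I] [Fintype J] {r : ℕ}

/-- `W` is a product of two contractions through `ℝʳ`. These are the dual certificates for the
Ky Fan norm `σ₁ + ⋯ + σᵣ`. -/
def IsContractionThrough (r : ℕ) (W : Matrix I J ℝ) : Prop :=
  ∃ (X : Matrix I (Fin r) ℝ) (Y : Matrix J (Fin r) ℝ),
    IsContraction X ∧ IsContraction Y ∧ W = X * Yᵀ

lemma IsContraction.isContractionThrough {W : Matrix I (Fin r) ℝ} (hW : IsContraction W) :
    IsContractionThrough r W :=
  ⟨W, 1, hW, isContraction_of_transpose_mul_self (by rw [Matrix.transpose_one, Matrix.one_mul]),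
    by rw [Matrix.transpose_one, Matrix.mul_one]⟩

namespace IsContractionThrough

lemma neg {W : Matrix I J ℝ} (hW : IsContractionThrough r W) : IsContractionThrough r (-W) := by
  obtain ⟨X, Y, hX, hY, rfl⟩ := hW
  exact ⟨-X, Y, hX.neg, hY, (Matrix.neg_mul X Yᵀ).symm⟩

lemma transpose {W : Matrix I J ℝ} (hW : IsContractionThrough r W) : IsContractionThrough r Wᵀ := by
  obtain ⟨X, Y, hX, hY, rfl⟩ := hW
  exact ⟨Y, X, hY, hX, by rw [Matrix.transpose_mul, Matrix.transpose_transpose]⟩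

lemma frobInner_le {W : Matrix I J ℝ} (hW : IsContractionThrough r W) (M : Matrix I J ℝ) :
    frobInner M W ≤ ∑ i ∈ Finset.Icc 1 r, singularValue M i := by
  obtain ⟨X, Y, hX, hY, rfl⟩ := hW
  calc frobInner M (X * Yᵀ) = (Xᵀ * (M * Y)).trace := by
        rw [← frobInner_mul_right, frobInner_apply, Matrix.trace_mul_comm]
    _ ≤ ∑ i ∈ Finset.Icc 1 r, singularValue (Xᵀ * (M * Y)) i := trace_le_sum_singularValue _
    _ ≤ ∑ i ∈ Finset.Icc 1 r, singularValue M i := Finset.sum_le_sum fun i _ =>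
        (singularValue_mul_le_right hX.transpose _ i).trans (singularValue_mul_le_left M hY i)

lemma abs_frobInner_le {W : Matrix I J ℝ} (hW : IsContractionThrough r W) (M : Matrix I J ℝ) :
    |frobInner M W| ≤ ∑ i ∈ Finset.Icc 1 r, singularValue M i :=
  abs_le'.2 ⟨hW.frobInner_le M, map_neg (frobInner M) W ▸ hW.neg.frobInner_le M⟩

end IsContractionThrough

lemma sum_singularValue_le_rpow_mul_schattenNorm (M : Matrix I J ℝ) (hI : r ≤ Fintype.card I)
    (hJ : r ≤ Fintype.card J) {q : ℝ} (hq : 1 ≤ q) :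
    ∑ i ∈ Finset.Icc 1 r, singularValue M i ≤ (r : ℝ) ^ (1 - 1 / q) * schattenNorm M q := by
  have hq0 : 0 < q := by positivity
  have hnonneg (s : Finset ℕ) : 0 ≤ ∑ i ∈ s, singularValue M i ^ q :=
    Finset.sum_nonneg fun _ _ => Real.rpow_nonneg (singularValue_nonneg _ _) _
  have hpow : (∑ i ∈ Finset.Icc 1 r, singularValue M i) ^ q ≤ (r : ℝ) ^ (q - 1) *
      ∑ i ∈ Finset.Icc 1 (min (Fintype.card I) (Fintype.card J)), singularValue M i ^ q := by
    have h := Real.rpow_sum_le_const_mul_sum_rpow (Finset.Icc 1 r) (singularValue M) hq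
    simp only [abs_of_nonneg (singularValue_nonneg M _), Nat.card_Icc, Nat.add_sub_cancel] at h
    refine h.trans (mul_le_mul_of_nonneg_left ?_ (by positivity))
    exact Finset.sum_le_sum_of_subset_of_nonneg
      (Finset.Icc_subset_Icc_right (le_min hI hJ))
      fun _ _ _ => Real.rpow_nonneg (singularValue_nonneg _ _) _
  calc ∑ i ∈ Finset.Icc 1 r, singularValue M i
      ≤ ((r : ℝ) ^ (q - 1) * ∑ i ∈ Finset.Icc 1 (min (Fintype.card I) (Fintype.card J)),
          singularValue M i ^ q) ^ (1 / q) := by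
        rw [one_div]
        exact (Real.le_rpow_inv_iff_of_pos (Finset.sum_nonneg fun _ _ => singularValue_nonneg _ _)
          (mul_nonneg (by positivity) (hnonneg _)) hq0).2 hpow
    _ = (r : ℝ) ^ (1 - 1 / q) * schattenNorm M q := by
        rw [Real.mul_rpow (by positivity) (hnonneg _), ← Real.rpow_mul (Nat.cast_nonneg r),
          schattenNorm]
        congr 2
        field_simp

lemma IsContractionThrough.abs_frobInner_le_schattenNorm {W : Matrix I J ℝ}
    (hW : IsContractionThrough r W) (hI : r ≤ Fintype.card I) (hJ : r ≤ Fintype.card J) {q : ℝ}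
    (hq : 1 ≤ q) (M : Matrix I J ℝ) :
    |frobInner M W| ≤ (r : ℝ) ^ (1 - 1 / q) * schattenNorm M q :=
  (hW.abs_frobInner_le M).trans (sum_singularValue_le_rpow_mul_schattenNorm M hI hJ hq)

end KyFan

section RowSupport

variable {I J K : Type*} [Fintype I] [Fintype J] [Fintype K]

lemma mem_rowSupport {M : Matrix I J ℝ} {i : I} : i ∈ rowSupport M ↔ M i ≠ 0 := by
  simp [rowSupport]

lemma rowSupport_mul_subset (M : Matrix I J ℝ) (N : Matrix J K ℝ) :
    rowSupport (M * N) ⊆ rowSupport M := fun i hi => by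
  rw [mem_rowSupport] at hi ⊢
  contrapose! hi
  rw [Matrix.mul_apply_eq_vecMul, hi, Matrix.zero_vecMul]

lemma card_rowSupport_smul_add_smul_le (a b : ℝ) (M N : Matrix I J ℝ) :
    (rowSupport (a • M + b • N)).card ≤ (rowSupport M).card + (rowSupport N).card := by
  classical
  refine (Finset.card_le_card fun i hi => ?_).trans (Finset.card_union_le _ _)
  rw [Finset.mem_union, mem_rowSupport, mem_rowSupport]
  rw [mem_rowSupport] at hi
  contrapose! hi
  ext j
  simp [hi.1, hi.2]

/-- The matrix of the coordinate embedding `ℝ^α → ℝ^β` induced by `φ`. -/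
def embeddingMatrix {α β : Type*} [DecidableEq β] (φ : α ↪ β) : Matrix β α ℝ :=
  (1 : Matrix β β ℝ).submatrix id φ

lemma embeddingMatrix_transpose_mul_self {α β : Type*} [DecidableEq α] [Fintype β] [DecidableEq β]
    (φ : α ↪ β) : (embeddingMatrix φ)ᵀ * embeddingMatrix φ = 1 := by
  rw [embeddingMatrix, Matrix.transpose_submatrix, Matrix.transpose_one,
    ← Matrix.submatrix_mul _ _ _ _ _ Function.bijective_id, Matrix.mul_one,
    Matrix.submatrix_one_embedding]

lemma card_rowSupport_embeddingMatrix_mul_le [DecidableEq I] (φ : J ↪ I) (M : Matrix J K ℝ) :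
    (rowSupport (embeddingMatrix φ * M)).card ≤ (rowSupport M).card := by
  rw [← Finset.card_map φ]
  refine Finset.card_le_card fun i hi => ?_
  rw [mem_rowSupport] at hi
  contrapose! hi
  ext k
  rw [Matrix.mul_apply]
  refine Finset.sum_eq_zero fun j _ => ?_
  by_cases hij : i = φ j
  · have hj : M j = 0 := by
      by_contra hj
      exact hi (hij ▸ Finset.mem_map_of_mem φ (mem_rowSupport.2 hj))
    rw [hj, Pi.zero_apply, mul_zero]
  · rw [embeddingMatrix, Matrix.submatrix_apply, id_eq, Matrix.one_apply_ne hij, zero_mul]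

lemma card_rowSupport_embeddingMatrix_le [DecidableEq I] (φ : J ↪ I) :
    (rowSupport (embeddingMatrix φ)).card ≤ Fintype.card J := by
  classical
  have h := card_rowSupport_embeddingMatrix_mul_le φ (1 : Matrix J J ℝ)
  rw [Matrix.mul_one] at h
  exact h.trans (Finset.card_le_univ _)

end RowSupport

section Riesz

variable {n p : ℕ} (X : Matrix (Fin n) (Fin p) ℝ)

lemma bddAbove_sparse_l2norm_mulVec_sq (k : ℕ) :
    BddAbove {t | ∃ B : Finset (Fin p), B.card = k ∧ ∃ v : Fin p → ℝ,
      (∀ i, i ∉ B → v i = 0) ∧ l2norm v = 1 ∧ t = l2norm (X *ᵥ v) ^ 2} := by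
  refine ⟨frobNorm X ^ 2, ?_⟩
  rintro _ ⟨B, -, v, -, hv1, rfl⟩
  have h := l2norm_mulVec_le X v
  rw [hv1, mul_one] at h
  exact pow_le_pow_left₀ (l2norm_nonneg _) h 2

lemma kappaPlus_nonneg (k : ℕ) : 0 ≤ kappaPlus X k := Real.sqrt_nonneg _

variable {X} in
lemma le_of_kappaMinus_pos {k : ℕ} (h : 0 < kappaMinus X k) : k ≤ p := by
  by_contra! hpk
  have hempty : {t | ∃ B : Finset (Fin p), B.card = k ∧ ∃ v : Fin p → ℝ,
      (∀ i, i ∉ B → v i = 0) ∧ l2norm v = 1 ∧ t = l2norm (X *ᵥ v) ^ 2} = ∅ :=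
    Set.eq_empty_of_forall_notMem fun _ ⟨B, hB, _⟩ => hpk.not_ge (hB ▸ card_finset_fin_le B)
  exact h.ne' (by rw [kappaMinus, kappaMinusSq, hempty, Real.sInf_empty, Real.sqrt_zero])

lemma kappaPlus_mono {k l : ℕ} (hkl : k ≤ l) (hlp : l ≤ p) : kappaPlus X k ≤ kappaPlus X l := by
  refine Real.sqrt_le_sqrt (Real.sSup_le ?_ (Real.sSup_nonneg ?_))
  · rintro _ ⟨B, rfl, v, hv, hv1, rfl⟩
    obtain ⟨B', hBB', hB'⟩ := Finset.exists_superset_card_eq hkl (by simpa using hlp)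
    exact le_csSup (bddAbove_sparse_l2norm_mulVec_sq X l)
      ⟨B', hB', v, fun i hi => hv i fun hiB => hi (hBB' hiB), hv1, rfl⟩
  · rintro _ ⟨_, -, v, -, -, rfl⟩
    exact sq_nonneg _

lemma l2norm_mulVec_le_kappaPlus {k : ℕ} (hk : k ≤ p) {S : Finset (Fin p)} (hS : S.card ≤ k)
    {v : Fin p → ℝ} (hv : ∀ i, i ∉ S → v i = 0) :
    l2norm (X *ᵥ v) ≤ kappaPlus X k * l2norm v := by
  rcases eq_or_ne v 0 with rfl | hv0
  · simp [l2norm_zero]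
  obtain ⟨B, hSB, hB⟩ := Finset.exists_superset_card_eq hS (by simpa using hk)
  have hunit : l2norm (X *ᵥ ((l2norm v)⁻¹ • v)) ≤ kappaPlus X k :=
    Real.le_sqrt_of_sq_le <| le_csSup (bddAbove_sparse_l2norm_mulVec_sq X k)
      ⟨B, hB, _, fun i hi => by simp [hv i fun hiS => hi (hSB hiS)], l2norm_inv_smul_self hv0, rfl⟩
  rwa [Matrix.mulVec_smul, l2norm_smul, abs_of_pos (inv_pos.2 (l2norm_pos hv0)),
    inv_mul_le_iff₀ (l2norm_pos hv0), mul_comm] at hunit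

lemma frobNorm_mul_le_kappaPlus {m k : ℕ} (hk : k ≤ p) {F : Matrix (Fin p) (Fin m) ℝ}
    (hF : (rowSupport F).card ≤ k) : frobNorm (X * F) ≤ kappaPlus X k * frobNorm F := by
  refine le_of_sq_le_sq ?_ (mul_nonneg (kappaPlus_nonneg X k) (frobNorm_nonneg F))
  rw [mul_pow, frobNorm_sq_eq_sum_l2norm_sq, frobNorm_sq_eq_sum_l2norm_sq F, Finset.mul_sum]
  refine Finset.sum_le_sum fun j _ => ?_
  rw [← mul_pow]
  refine pow_le_pow_left₀ (l2norm_nonneg _) ?_ 2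
  refine l2norm_mulVec_le_kappaPlus X hk hF fun i hi => ?_
  rw [mem_rowSupport, not_not] at hi
  exact congrFun hi j

end Riesz

section ParameterSpace

variable {I J : Type*} [Fintype I] [Fintype J]

lemma card_le_rank_of_forall_mul_l2norm_le {M : Matrix I J ℝ} {t : ℝ} (ht : 0 < t)
    (h : ∀ v, t * l2norm v ≤ l2norm (M *ᵥ v)) : Fintype.card J ≤ M.rank := by
  have hinj : Function.Injective M.mulVecLin := by
    rw [← LinearMap.ker_eq_bot, LinearMap.ker_eq_bot']
    intro v hv
    by_contra hv0
    have hle := h v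
    rw [← Matrix.mulVecLin_apply, hv, l2norm_zero] at hle
    exact hle.not_gt (mul_pos ht (l2norm_pos hv0))
  rw [Matrix.rank, LinearMap.finrank_range_of_inj hinj, Module.finrank_fintype_fun_eq_card]

lemma le_singularValue_card [Nonempty J] {M : Matrix I J ℝ} {t : ℝ}
    (h : ∀ v, t * l2norm v ≤ l2norm (M *ᵥ v)) : t ≤ singularValue M (Fintype.card J) := by
  rw [← Module.finrank_fintype_fun_eq_card ℝ, ← finrank_top ℝ (J → ℝ)]
  exact le_singularValue top_ne_bot fun v _ => h v

variable {r : ℕ} {U : Matrix I (Fin r) ℝ} {V : Matrix J (Fin r) ℝ} {F : Matrix I J ℝ} {a e : ℝ}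

lemma l2norm_smul_add_smul_mulVec_le (hU : Uᵀ * U = 1) (hV : Vᵀ * V = 1) (hF : IsContraction F)
    (ha : 0 ≤ a) (he : 0 ≤ e) (v : J → ℝ) :
    l2norm ((a • (U * Vᵀ) + e • F) *ᵥ v) ≤ (a + e) * l2norm v := by
  have hUV : IsContraction (U * Vᵀ) := (isContraction_of_transpose_mul_self hU).mul
    (isContraction_of_transpose_mul_self hV).transpose
  rw [Matrix.add_mulVec, Matrix.smul_mulVec, Matrix.smul_mulVec, add_mul]
  refine (l2norm_add_le _ _).trans ?_
  rw [l2norm_smul, l2norm_smul, abs_of_nonneg ha, abs_of_nonneg he]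
  exact add_le_add (mul_le_mul_of_nonneg_left (hUV v) ha) (mul_le_mul_of_nonneg_left (hF v) he)

lemma sub_mul_l2norm_le_l2norm_mulVec (hU : Uᵀ * U = 1) (hV : Vᵀ * V = 1) (hF : IsContraction F)
    (ha : 0 ≤ a) (he : 0 ≤ e) (w : Fin r → ℝ) :
    (a - e) * l2norm w ≤ l2norm (((a • (U * Vᵀ) + e • F) * V) *ᵥ w) := by
  have hdecomp : a • (U *ᵥ w) =
      ((a • (U * Vᵀ) + e • F) * V) *ᵥ w + (-e) • ((F * V) *ᵥ w) := by
    rw [Matrix.add_mul, Matrix.smul_mul, Matrix.smul_mul, Matrix.mul_assoc, hV, Matrix.mul_one,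
      Matrix.add_mulVec, Matrix.smul_mulVec, Matrix.smul_mulVec, neg_smul, add_neg_cancel_right]
  have h := l2norm_add_le (((a • (U * Vᵀ) + e • F) * V) *ᵥ w) ((-e) • ((F * V) *ᵥ w))
  rw [← hdecomp, l2norm_smul, l2norm_smul, abs_neg, abs_of_nonneg ha, abs_of_nonneg he,
    l2norm_mulVec_of_transpose_mul_self hU] at h
  have hFV := mul_le_mul_of_nonneg_left (hF.mul (isContraction_of_transpose_mul_self hV) w) he
  linarith

lemma memTheta_smul_add_smul {p m s : ℕ} {U : Matrix (Fin p) (Fin r) ℝ}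
    {V : Matrix (Fin m) (Fin r) ℝ} {F : Matrix (Fin p) (Fin m) ℝ} {d γ : ℝ} (hU : Uᵀ * U = 1)
    (hV : Vᵀ * V = 1) (hF : IsContraction F) (hr : 1 ≤ r) (hd : 0 < d) (he : 0 ≤ e)
    (hlow : d < a - e) (hup : a + e ≤ γ * d) (hrank : (a • (U * Vᵀ) + e • F).rank ≤ r)
    (hsupp : (rowSupport (a • (U * Vᵀ) + e • F)).card ≤ s) :
    memTheta (a • (U * Vᵀ) + e • F) s r d γ := by
  have ha : 0 ≤ a := by linarith
  have hbelow := sub_mul_l2norm_le_l2norm_mulVec hU hV hF ha he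
  refine ⟨hrank.antisymm ?_, hd, ?_, ?_, hsupp⟩
  · refine le_trans ?_ (Matrix.rank_mul_le_left _ V)
    simpa using card_le_rank_of_forall_mul_l2norm_le (hd.trans hlow) hbelow
  · exact (singularValue_le (add_nonneg ha he)
      (l2norm_smul_add_smul_mulVec_le hU hV hF ha he) 1).trans hup
  · have : Nonempty (Fin r) := ⟨⟨0, hr⟩⟩
    refine (hlow.trans_le (le_singularValue_card hbelow)).trans_le ?_
    rw [Fintype.card_fin]
    exact singularValue_mul_le_left _ (isContraction_of_transpose_mul_self hV) r

end ParameterSpace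

section SeparatedFamily

variable {ι I J K : Type*} [Fintype ι] [Fintype I] [Fintype J] [Fintype K] {r : ℕ} {δ L : ℝ}

/-- A finite family of matrices `E i` in the Frobenius unit ball, with certificates `W i j` for the
separation of `E i` from `E j` in the Ky Fan norm `σ₁ + ⋯ + σᵣ`. Instead of being pairwise
separated, each `E i` is allowed to be `δ`-close to a proportion `exp (-L)` of the family. -/
structure IsSeparatedFamily (r : ℕ) (δ L : ℝ) (E : ι → Matrix I J ℝ)
    (W : ι → ι → Matrix I J ℝ) : Prop where
  nonempty : Nonempty ι
  frobNorm_le_one : ∀ i, frobNorm (E i) ≤ 1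
  isContractionThrough : ∀ i j, IsContractionThrough r (W i j)
  card_lt_mul_exp_le : ∀ i, (Finset.univ.filter fun j => frobInner (E i - E j) (W i j) < δ).card *
    Real.exp L ≤ Fintype.card ι

namespace IsSeparatedFamily

variable {E : ι → Matrix I J ℝ} {W : ι → ι → Matrix I J ℝ}

lemma mono (h : IsSeparatedFamily r δ L E W) {δ' : ℝ} (hδ : δ' ≤ δ) :
    IsSeparatedFamily r δ' L E W where
  nonempty := h.nonempty
  frobNorm_le_one := h.frobNorm_le_one
  isContractionThrough := h.isContractionThrough
  card_lt_mul_exp_le i := by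
    refine le_trans ?_ (h.card_lt_mul_exp_le i)
    gcongr

lemma transpose (h : IsSeparatedFamily r δ L E W) :
    IsSeparatedFamily r δ L (fun i => (E i)ᵀ) fun i j => (W i j)ᵀ where
  nonempty := h.nonempty
  frobNorm_le_one i := by
    rw [← sq_le_one_iff₀ (frobNorm_nonneg _), frobNorm_sq_eq_frobInner, frobInner_transpose,
      ← frobNorm_sq_eq_frobInner, sq_le_one_iff₀ (frobNorm_nonneg _)]
    exact h.frobNorm_le_one i
  isContractionThrough i j := (h.isContractionThrough i j).transpose
  card_lt_mul_exp_le i := by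
    simpa only [← Matrix.transpose_sub, frobInner_transpose] using h.card_lt_mul_exp_le i

lemma mul_left [DecidableEq I] (h : IsSeparatedFamily r δ L E W) {U : Matrix K I ℝ}
    (hU : Uᵀ * U = 1) : IsSeparatedFamily r δ L (fun i => U * E i) fun i j => U * W i j := by
  have hinner (M N : Matrix I J ℝ) : frobInner (U * M) (U * N) = frobInner M N := by
    rw [frobInner_mul_left, ← Matrix.mul_assoc, hU, Matrix.one_mul]
  refine ⟨h.nonempty, fun i => ?_, fun i j => ?_, fun i => ?_⟩
  · rw [← sq_le_one_iff₀ (frobNorm_nonneg _), frobNorm_sq_eq_frobInner, hinner,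
      ← frobNorm_sq_eq_frobInner, sq_le_one_iff₀ (frobNorm_nonneg _)]
    exact h.frobNorm_le_one i
  · obtain ⟨X, Y, hX, hY, hW⟩ := h.isContractionThrough i j
    exact ⟨U * X, Y, (isContraction_of_transpose_mul_self hU).mul hX, hY,
      by rw [hW, Matrix.mul_assoc]⟩
  · simpa only [← Matrix.mul_sub, hinner] using h.card_lt_mul_exp_le i

lemma mul_transpose [DecidableEq J] (h : IsSeparatedFamily r δ L E W) {V : Matrix K J ℝ}
    (hV : Vᵀ * V = 1) : IsSeparatedFamily r δ L (fun i => E i * Vᵀ) fun i j => W i j * Vᵀ := by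
  simpa only [Matrix.transpose_mul, Matrix.transpose_transpose] using
    (h.transpose.mul_left hV).transpose

open Classical in
/-- A single matrix `M` is close to few members of the family: two members that are both close to
`M` are close to each other. -/
lemma card_forall_abs_frobInner_lt_mul_exp_le (h : IsSeparatedFamily r δ L E W)
    (A₀ M : Matrix I J ℝ) {e : ℝ} (he : 0 ≤ e) :
    (Finset.univ.filter fun i =>
      ∀ j k, |frobInner (M - (A₀ + e • E i)) (W j k)| < e * δ / 2).card * Real.exp L ≤
      Fintype.card ι := by
  rcases isEmpty_or_nonempty
    {i // ∀ j k, |frobInner (M - (A₀ + e • E i)) (W j k)| < e * δ / 2} with hempty | ⟨i, hi⟩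
  · rw [Finset.filter_false_of_mem fun i _ hi => hempty.false ⟨i, hi⟩, Finset.card_empty,
      Nat.cast_zero, zero_mul]
    exact Nat.cast_nonneg _
  refine le_trans ?_ (h.card_lt_mul_exp_le i)
  gcongr with j
  intro hj
  refine lt_of_mul_lt_mul_left ?_ he
  have hdecomp : e • (E i - E j) = (M - (A₀ + e • E j)) - (M - (A₀ + e • E i)) := by
    rw [smul_sub]
    abel
  have hsub : e * frobInner (E i - E j) (W i j) =
      frobInner (M - (A₀ + e • E j)) (W i j) - frobInner (M - (A₀ + e • E i)) (W i j) := by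
    rw [← smul_eq_mul, ← LinearMap.smul_apply, ← map_smul, hdecomp, map_sub, LinearMap.sub_apply]
  linarith [(abs_lt.1 (hi i j)).1, (abs_lt.1 (hj i j)).2]

end IsSeparatedFamily

end SeparatedFamily

section Risk

variable {n m p : ℕ}

lemma measurableSet_forall_abs_frobInner_lt {κ : Type*} [Countable κ]
    {Ahat : Matrix (Fin n) (Fin m) ℝ → Matrix (Fin p) (Fin m) ℝ} (hA : Measurable Ahat)
    (A : Matrix (Fin p) (Fin m) ℝ) (W : κ → κ → Matrix (Fin p) (Fin m) ℝ) (t : ℝ) :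
    MeasurableSet {Y | ∀ j k, |frobInner (Ahat Y - A) (W j k)| < t} := by
  have hentry (x : Fin p) (y : Fin m) : Measurable fun Y => Ahat Y x y :=
    (measurable_pi_apply y).comp ((measurable_pi_apply x).comp hA)
  simp only [Set.ofPred_forall, frobInner_eq_sum, Matrix.sub_apply]
  refine MeasurableSet.iInter fun j => MeasurableSet.iInter fun k => ?_
  refine measurableSet_lt (Measurable.abs ?_) measurable_const
  exact Finset.measurable_sum _ fun x _ => Finset.measurable_sum _ fun y _ =>
    ((hentry x y).sub_const _).mul_const _

lemma ofReal_div_le_lintegral {Ω : Type*} [MeasurableSpace Ω] {μ : Measure Ω}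
    [IsProbabilityMeasure μ] {B : Set Ω} (hB : MeasurableSet B) {L t : ℝ} (hL : 1 / 16 ≤ L)
    (hμB : μ B ≤ ENNReal.ofReal (Real.exp (-L / 4))) {f : Ω → ℝ≥0∞}
    (hf : ∀ x ∉ B, ENNReal.ofReal t ≤ f x) :
    ENNReal.ofReal (t / 65) ≤ ∫⁻ x, f x ∂μ := by
  have hexp : Real.exp (-L / 4) ≤ 64 / 65 := by
    have h := Real.add_one_le_exp (L / 4)
    rw [neg_div, Real.exp_neg]
    exact inv_le_of_inv_le₀ (by norm_num) (by linarith)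
  have hcompl : ENNReal.ofReal (1 / 65) ≤ μ Bᶜ := by
    rw [prob_compl_eq_one_sub hB]
    refine le_trans ?_ (tsub_le_tsub_left (hμB.trans (ENNReal.ofReal_le_ofReal hexp)) 1)
    rw [← ENNReal.ofReal_one, ← ENNReal.ofReal_sub _ (by norm_num)]
    norm_num
  calc ENNReal.ofReal (t / 65) = ENNReal.ofReal t * ENNReal.ofReal (1 / 65) := by
        rw [← ENNReal.ofReal_mul' (by norm_num), mul_one_div]
    _ ≤ ENNReal.ofReal t * μ Bᶜ := by gcongr
    _ = ∫⁻ _ in Bᶜ, ENNReal.ofReal t ∂μ := (setLIntegral_const _ _).symm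
    _ ≤ ∫⁻ x in Bᶜ, f x ∂μ := setLIntegral_mono' hB.compl hf
    _ ≤ ∫⁻ x, f x ∂μ := setLIntegral_le_lintegral _ _

lemma IsSeparatedFamily.ofReal_le_iSup_lintegral {ι : Type*} [Fintype ι] {r : ℕ} {δ L e q : ℝ}
    {F : ι → Matrix (Fin p) (Fin m) ℝ} {W : ι → ι → Matrix (Fin p) (Fin m) ℝ}
    (hF : IsSeparatedFamily r δ L F W) (hL : 1 / 16 ≤ L) (hδ : 0 ≤ δ) (he : 0 ≤ e) (hr : 1 ≤ r)
    (hrp : r ≤ p) (hrm : r ≤ m) (hq : 1 ≤ q) {v : ℝ≥0} (hv : v ≠ 0) {X : Matrix (Fin n) (Fin p) ℝ}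
    {A₀ : Matrix (Fin p) (Fin m) ℝ} {Θ : Set (Matrix (Fin p) (Fin m) ℝ)}
    (hΘ : ∀ i, A₀ + e • F i ∈ Θ) (hX : ∀ i, frobNorm (X * (e • F i)) ^ 2 ≤ v * (L / 2))
    {Ahat : Matrix (Fin n) (Fin m) ℝ → Matrix (Fin p) (Fin m) ℝ} (hA : Measurable Ahat) :
    ENNReal.ofReal ((e * δ / 2 / (r : ℝ) ^ (1 - 1 / q)) ^ 2 / 65) ≤
      ⨆ A ∈ Θ, ∫⁻ Y, ENNReal.ofReal (schattenNorm (Ahat Y - A) q ^ 2)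
        ∂((gaussianMatrix n m v).map fun Z => X * A + Z) := by
  have := hF.nonempty
  have hchi (i : ι) : HasChiSqBound ((gaussianMatrix n m v).map fun Z => X * (A₀ + e • F i) + Z)
      ((gaussianMatrix n m v).map fun Z => X * A₀ + Z)
      (ENNReal.ofReal (Real.exp (L / 2))) := by
    obtain ⟨f, hf, hfP, hfL⟩ := hasChiSqBound_gaussianMatrix hv (X * (A₀ + e • F i)) (X * A₀)
    refine ⟨f, hf, hfP, hfL.trans (ENNReal.ofReal_le_ofReal (Real.exp_le_exp.2 ?_))⟩
    rw [← Matrix.mul_sub, add_sub_cancel_left, div_le_iff₀ (by positivity), mul_comm]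
    exact hX i
  have hB (i : ι) := measurableSet_forall_abs_frobInner_lt hA (A₀ + e • F i) W (e * δ / 2)
  obtain ⟨i, hi⟩ := exists_measure_le_exp_of_hasChiSqBound hchi hB fun Y => by
    simpa only [Set.mem_ofPred_eq] using
      hF.card_forall_abs_frobInner_lt_mul_exp_le A₀ (Ahat Y) he
  refine le_trans (ofReal_div_le_lintegral (hB i) hL hi fun Y hY => ?_)
    (le_iSup₂_of_le _ (hΘ i) le_rfl)
  simp only [Set.mem_ofPred_eq, not_forall, not_lt] at hY
  obtain ⟨j, k, hjk⟩ := hY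
  have hschatten := (hF.isContractionThrough j k).abs_frobInner_le_schattenNorm (by simpa)
    (by simpa) hq (Ahat Y - (A₀ + e • F i))
  gcongr
  rw [div_le_iff₀' (by positivity)]
  exact hjk.trans hschatten

end Risk

section Hamming

variable {ι α : Type*} [Fintype ι] [Fintype α] [DecidableEq ι] [DecidableEq α]

lemma sum_pow_hammingDist {A : Type*} [CommRing A] (x : ι → α) (c : A) :
    ∑ y, c ^ hammingDist x y = (1 + (Fintype.card α - 1) * c) ^ Fintype.card ι := by
  have hfactor (i : ι) : ∑ b, (if x i ≠ b then c else 1) = 1 + (Fintype.card α - 1) * c := by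
    have hsplit (b : α) : (if x i ≠ b then c else 1) = c + if x i = b then 1 - c else 0 := by
      by_cases h : x i = b <;> simp [h]
    simp_rw [hsplit]
    rw [Finset.sum_add_distrib, Finset.sum_ite_eq, if_pos (Finset.mem_univ _), Finset.sum_const,
      Finset.card_univ, nsmul_eq_mul]
    ring
  calc ∑ y, c ^ hammingDist x y = ∑ y : ι → α, ∏ i, if x i ≠ y i then c else 1 := by
        simp only [Finset.prod_ite, Finset.prod_const, one_pow, mul_one, hammingDist]
    _ = (1 + (Fintype.card α - 1) * c) ^ Fintype.card ι := by
        rw [← Fintype.prod_sum fun i b => if x i ≠ b then c else 1]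
        simp_rw [hfactor]
        rw [Finset.prod_const, Finset.card_univ]

lemma two_sub_inv_le_rpow {t : ℝ} (ht : 2 ≤ t) : 2 - t⁻¹ ≤ t ^ (2 / 3 : ℝ) := by
  have ht0 : 0 < t := by linarith
  obtain ⟨u, hu, rfl⟩ : ∃ u, 0 ≤ u ∧ t = 2 + u := ⟨t - 2, by linarith, by ring⟩
  have hpoly : (2 * (2 + u) - 1) ^ 3 ≤ (2 + u) ^ 5 := by
    rw [← sub_nonneg]
    have hexpand : (2 + u) ^ 5 - (2 * (2 + u) - 1) ^ 3 =
        5 + 26 * u + 44 * u ^ 2 + 32 * u ^ 3 + 10 * u ^ 4 + u ^ 5 := by ring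
    rw [hexpand]
    positivity
  refine le_of_pow_le_pow_left₀ three_ne_zero (by positivity) ?_
  rw [← Real.rpow_mul_natCast ht0.le]
  norm_num
  calc (2 - (2 + u)⁻¹) ^ 3 = (2 * (2 + u) - 1) ^ 3 / (2 + u) ^ 3 := by
        rw [← div_pow]
        congr 1
        field_simp
    _ ≤ (2 + u) ^ 2 := by
        rw [div_le_iff₀ (by positivity), ← pow_add]
        exact hpoly

lemma card_hammingDist_lt_mul_rpow_le (hα : 2 ≤ Fintype.card α) (x : ι → α) :
    (Finset.univ.filter fun y => 16 * hammingDist x y < Fintype.card ι).card *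
      (Fintype.card α : ℝ) ^ (Fintype.card ι / 4 : ℝ) ≤ Fintype.card (ι → α) := by
  have ht2 : (2 : ℝ) ≤ Fintype.card α := by exact_mod_cast hα
  set t := (Fintype.card α : ℝ)
  set k := Fintype.card ι
  have ht0 : 0 < t := by linarith
  have hball : (Finset.univ.filter fun y => 16 * hammingDist x y < k).card * t ^ (-(k / 16) : ℝ) ≤
      (t ^ (2 / 3 : ℝ)) ^ k := calc
    _ = ∑ y with 16 * hammingDist x y < k, t ^ (-(k / 16) : ℝ) := by
        rw [Finset.sum_const, nsmul_eq_mul]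
    _ ≤ ∑ y with 16 * hammingDist x y < k, t⁻¹ ^ hammingDist x y := by
        refine Finset.sum_le_sum fun y hy => ?_
        have hd : (16 * hammingDist x y : ℝ) < k := by exact_mod_cast (Finset.mem_filter.1 hy).2
        rw [inv_pow, ← Real.rpow_natCast, ← Real.rpow_neg ht0.le]
        exact Real.rpow_le_rpow_of_exponent_le (by linarith) (by linarith)
    _ ≤ ∑ y, t⁻¹ ^ hammingDist x y :=
        Finset.sum_le_sum_of_subset_of_nonneg (Finset.filter_subset _ _) fun _ _ _ => by positivity
    _ = (2 - t⁻¹) ^ k := by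
        rw [sum_pow_hammingDist]
        congr 1
        field_simp
        ring
    _ ≤ (t ^ (2 / 3 : ℝ)) ^ k := by
        have : t⁻¹ ≤ 1 := inv_le_one_of_one_le₀ (by linarith)
        exact pow_le_pow_left₀ (by linarith) (two_sub_inv_le_rpow ht2) k
  rw [Real.rpow_neg ht0.le, ← div_eq_mul_inv, div_le_iff₀ (by positivity),
    ← Real.rpow_mul_natCast ht0.le, ← Real.rpow_add ht0] at hball
  calc _ ≤ t ^ (2 / 3 * k + k / 16 : ℝ) * t ^ (k / 4 : ℝ) := by gcongr
    _ = t ^ (47 / 48 * k : ℝ) := by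
        rw [← Real.rpow_add ht0]
        ring_nf
    _ ≤ t ^ (k : ℝ) := Real.rpow_le_rpow_of_exponent_le (by linarith)
        (mul_le_of_le_one_left (Nat.cast_nonneg k) (by norm_num))
    _ = Fintype.card (ι → α) := by rw [Real.rpow_natCast, Fintype.card_fun, Nat.cast_pow]

end Hamming

section SignMatrix

variable {R C : Type*} [Fintype R] [Fintype C]

/-- The fourth power of the Schatten-4 norm of `D`. -/
def schattenFourPow (D : Matrix R C ℝ) : ℝ := frobInner (D * Dᵀ) (D * Dᵀ)

lemma schattenFourPow_nonneg (D : Matrix R C ℝ) : 0 ≤ schattenFourPow D := frobInner_self_nonneg _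

/-- The parallelogram law for `A ± B` bounds the Gram matrices, up to a nonnegative cross term. -/
lemma schattenFourPow_sub_le (A B : Matrix R C ℝ) :
    schattenFourPow (A - B) ≤ 8 * schattenFourPow A + 8 * schattenFourPow B := by
  set P := (A - B) * (A - B)ᵀ
  set Q := (A + B) * (A + B)ᵀ
  have hcross : 0 ≤ frobInner P Q :=
    frobInner_mul_transpose_mul_transpose (A - B) (A + B) ▸ frobInner_self_nonneg _
  have hpar : P + Q = (2 : ℝ) • (A * Aᵀ + B * Bᵀ) := by
    simp only [P, Q, Matrix.transpose_sub, Matrix.transpose_add, Matrix.sub_mul, Matrix.mul_sub,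
      Matrix.add_mul, Matrix.mul_add, two_smul]
    abel
  have hsum : frobInner (P + Q) (P + Q) ≤ 8 * schattenFourPow A + 8 * schattenFourPow B := by
    have h := frobInner_self_nonneg (A * Aᵀ - B * Bᵀ)
    rw [hpar, schattenFourPow, schattenFourPow]
    simp only [map_add, map_sub, map_smul, LinearMap.add_apply, LinearMap.sub_apply,
      LinearMap.smul_apply, smul_eq_mul] at h ⊢
    linarith
  simp only [map_add, LinearMap.add_apply, frobInner_comm Q P] at hsum
  have hQ := frobInner_self_nonneg Q
  change frobInner P P ≤ _
  linarith

/-- The matrix with entries `±1` given by `x`. -/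
def signMatrix (x : R × C → ℤˣ) : Matrix R C ℝ := Matrix.of fun i j => ((x (i, j) : ℤ) : ℝ)

lemma schattenFourPow_signMatrix (x : R × C → ℤˣ) : schattenFourPow (signMatrix x) =
    ∑ i, ∑ k, ∑ j, ∑ l, (((x (i, j) * x (k, j) * (x (i, l) * x (k, l)) : ℤˣ) : ℤ) : ℝ) := by
  simp only [schattenFourPow, frobInner_eq_sum, Matrix.mul_apply, Matrix.transpose_apply,
    signMatrix, Matrix.of_apply, Finset.sum_mul_sum, Units.val_mul, Int.cast_mul]

variable [DecidableEq R] [DecidableEq C]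

/-- Flipping the sign at `(i, j)` flips the product unless `i = k` or `j = l`. -/
lemma sum_sign_mul_le (i k : R) (j l : C) :
    ∑ x : R × C → ℤˣ, (((x (i, j) * x (k, j) * (x (i, l) * x (k, l)) : ℤˣ) : ℤ) : ℝ) ≤
      Fintype.card (R × C → ℤˣ) * ((if i = k then 1 else 0) + if j = l then 1 else 0) := by
  by_cases h : i = k ∨ j = l
  · have hone (u : ℤˣ) : ((u : ℤ) : ℝ) ≤ 1 := by
      rcases Int.units_eq_one_or u with rfl | rfl <;> norm_num
    refine (Finset.sum_le_card_nsmul _ _ 1 fun x _ => hone _).trans ?_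
    rw [nsmul_eq_mul, Finset.card_univ]
    refine mul_le_mul_of_nonneg_left ?_ (Nat.cast_nonneg _)
    rcases h with rfl | rfl <;> rw [if_pos rfl] <;> split_ifs <;> norm_num
  · obtain ⟨hik, hjl⟩ := not_or.1 h
    have hflip := Equiv.sum_comp (Equiv.mulRight (Pi.mulSingle (i, j) (-1) : R × C → ℤˣ))
      fun x => (((x (i, j) * x (k, j) * (x (i, l) * x (k, l)) : ℤˣ) : ℤ) : ℝ)
    have hkj : (k, j) ≠ (i, j) := fun he => hik (Prod.ext_iff.1 he).1.symm
    have hil : (i, l) ≠ (i, j) := fun he => hjl (Prod.ext_iff.1 he).2.symm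
    have hkl : (k, l) ≠ (i, j) := fun he => hjl (Prod.ext_iff.1 he).2.symm
    simp only [Equiv.coe_mulRight, Pi.mul_apply, Pi.mulSingle_eq_same, Pi.mulSingle_eq_of_ne hkj,
      Pi.mulSingle_eq_of_ne hil, Pi.mulSingle_eq_of_ne hkl, mul_one, mul_neg, neg_mul,
      Units.val_neg, Int.cast_neg, Finset.sum_neg_distrib] at hflip
    rw [if_neg hik, if_neg hjl, add_zero, mul_zero]
    linarith

lemma sum_schattenFourPow_signMatrix_le :
    ∑ x : R × C → ℤˣ, schattenFourPow (signMatrix x) ≤ Fintype.card (R × C → ℤˣ) *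
      (Fintype.card R * Fintype.card C ^ 2 + Fintype.card R ^ 2 * Fintype.card C : ℝ) := by
  simp_rw [schattenFourPow_signMatrix]
  rw [Finset.sum_comm]
  calc _ = ∑ i : R, ∑ k : R, ∑ j : C, ∑ l : C, ∑ x : R × C → ℤˣ,
        (((x (i, j) * x (k, j) * (x (i, l) * x (k, l)) : ℤˣ) : ℤ) : ℝ) := by
        refine Finset.sum_congr rfl fun i _ => ?_
        rw [Finset.sum_comm]
        refine Finset.sum_congr rfl fun k _ => ?_
        rw [Finset.sum_comm]
        exact Finset.sum_congr rfl fun j _ => Finset.sum_comm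
    _ ≤ ∑ i : R, ∑ k : R, ∑ j : C, ∑ l : C,
        (Fintype.card (R × C → ℤˣ) * ((if i = k then 1 else 0) + if j = l then 1 else 0) : ℝ) :=
        Finset.sum_le_sum fun i _ => Finset.sum_le_sum fun k _ => Finset.sum_le_sum fun j _ =>
          Finset.sum_le_sum fun l _ => sum_sign_mul_le i k j l
    _ = _ := by
        simp only [← Finset.mul_sum, Finset.sum_add_distrib, Finset.sum_const, Finset.card_univ,
          nsmul_eq_mul, Finset.sum_ite_eq, Finset.mem_univ, if_true, mul_one]
        ring

lemma mul_card_le_card_schattenFourPow_signMatrix_le [Nonempty R]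
    (hRC : Fintype.card R ≤ Fintype.card C) :
    (15 / 16 * Fintype.card (R × C → ℤˣ) : ℝ) ≤ Fintype.card {x : R × C → ℤˣ //
      schattenFourPow (signMatrix x) ≤ 32 * Fintype.card R * Fintype.card C ^ 2} := by
  set t : ℝ := 32 * Fintype.card R * Fintype.card C ^ 2 with ht
  have hR : (0 : ℝ) < Fintype.card R := by exact_mod_cast Fintype.card_pos
  have hRC' : (Fintype.card R : ℝ) ≤ Fintype.card C := by exact_mod_cast hRC
  have ht0 : 0 < t := by
    have := hR.trans_le hRC'
    positivity
  have hmarkov : (Fintype.card {x : R × C → ℤˣ // ¬ schattenFourPow (signMatrix x) ≤ t} : ℝ) * t ≤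
      Fintype.card (R × C → ℤˣ) * (t / 16) := calc
    _ ≤ ∑ x with ¬ schattenFourPow (signMatrix x) ≤ t, schattenFourPow (signMatrix x) := by
        rw [Fintype.card_subtype, ← nsmul_eq_mul]
        exact Finset.card_nsmul_le_sum _ _ _ fun x hx => (not_le.1 (Finset.mem_filter.1 hx).2).le
    _ ≤ ∑ x : R × C → ℤˣ, schattenFourPow (signMatrix x) :=
        Finset.sum_le_sum_of_subset_of_nonneg (Finset.filter_subset _ _) fun _ _ _ =>
          schattenFourPow_nonneg _
    _ ≤ _ := sum_schattenFourPow_signMatrix_le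
    _ ≤ Fintype.card (R × C → ℤˣ) * (t / 16) := by
        refine mul_le_mul_of_nonneg_left ?_ (Nat.cast_nonneg _)
        rw [ht]
        nlinarith [mul_le_mul_of_nonneg_left hRC' (mul_nonneg hR.le (hR.le.trans hRC'))]
  rw [Fintype.card_subtype_compl, Nat.cast_sub (Fintype.card_subtype_le _)] at hmarkov
  have := le_of_mul_le_mul_right (hmarkov.trans_eq (by ring :
    _ = (Fintype.card (R × C → ℤˣ) / 16 : ℝ) * t)) ht0
  linarith

end SignMatrix

section DualCertificate

variable {R C : Type*} [Fintype C] [DecidableEq R]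

/-- The regularised Gram matrix `D Dᵀ + a`. With `S` this matrix, `√a S⁻¹ D` is a contraction that
plays the role of the polar factor of `D` as a certificate for the nuclear norm. -/
def ridgeGram (a : ℝ) (D : Matrix R C ℝ) : Matrix R R ℝ := D * Dᵀ + a • 1

lemma ridgeGram_transpose (a : ℝ) (D : Matrix R C ℝ) : (ridgeGram a D)ᵀ = ridgeGram a D := by
  simp [ridgeGram]

variable [Fintype R] {a : ℝ}

lemma isUnit_det_ridgeGram (ha : 0 < a) (D : Matrix R C ℝ) : IsUnit (ridgeGram a D).det := by
  have hpd : (ridgeGram a D).PosDef := by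
    rw [ridgeGram, ← Matrix.conjTranspose_eq_transpose_of_trivial]
    exact .posSemidef_add (Matrix.posSemidef_self_mul_conjTranspose D) (Matrix.PosDef.one.smul ha)
  exact (Matrix.isUnit_iff_isUnit_det _).1 hpd.isUnit

lemma isContraction_sqrt_smul_ridgeGram_inv_mul (ha : 0 < a) (D : Matrix R C ℝ) :
    IsContraction (√a • ((ridgeGram a D)⁻¹ * D)) := by
  rw [← Matrix.transpose_transpose (√a • ((ridgeGram a D)⁻¹ * D))]
  refine IsContraction.transpose fun z => ?_
  obtain ⟨y, rfl⟩ : ∃ y, ridgeGram a D *ᵥ y = z := ⟨(ridgeGram a D)⁻¹ *ᵥ z, by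
    rw [Matrix.mulVec_mulVec, Matrix.mul_nonsing_inv _ (isUnit_det_ridgeGram ha D),
      Matrix.one_mulVec]⟩
  have hleft : (√a • ((ridgeGram a D)⁻¹ * D))ᵀ *ᵥ (ridgeGram a D *ᵥ y) = √a • (Dᵀ *ᵥ y) := by
    rw [Matrix.transpose_smul, Matrix.transpose_mul, Matrix.transpose_nonsing_inv,
      ridgeGram_transpose, Matrix.smul_mulVec, Matrix.mulVec_mulVec, Matrix.mul_assoc,
      Matrix.nonsing_inv_mul _ (isUnit_det_ridgeGram ha D), Matrix.mul_one]
  have hright : l2norm (ridgeGram a D *ᵥ y) ^ 2 =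
      l2norm ((D * Dᵀ) *ᵥ y) ^ 2 + 2 * (a * l2norm (Dᵀ *ᵥ y) ^ 2) + a ^ 2 * l2norm y ^ 2 := by
    have hcross : (D * Dᵀ) *ᵥ y ⬝ᵥ y = l2norm (Dᵀ *ᵥ y) ^ 2 := by
      rw [l2norm_sq, ← Matrix.mulVec_mulVec, Matrix.dotProduct_mulVec, ← Matrix.mulVec_transpose,
        Matrix.transpose_transpose]
    rw [ridgeGram, Matrix.add_mulVec, Matrix.smul_mulVec, Matrix.one_mulVec, ← hcross, l2norm_sq,
      l2norm_sq, l2norm_sq]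
    simp only [add_dotProduct, dotProduct_add, smul_dotProduct, dotProduct_smul, smul_eq_mul,
      dotProduct_comm y]
    ring
  rw [hleft, ← sq_le_sq₀ (l2norm_nonneg _) (l2norm_nonneg _), l2norm_smul, mul_pow, sq_abs,
    Real.sq_sqrt ha.le, hright]
  have : 0 ≤ a * l2norm (Dᵀ *ᵥ y) ^ 2 := by positivity
  nlinarith [sq_nonneg (l2norm ((D * Dᵀ) *ᵥ y)), mul_nonneg (sq_nonneg a) (sq_nonneg (l2norm y))]

/-- Cauchy–Schwarz for the form `(V, V') ↦ ⟨V, S V'⟩` with `S = D Dᵀ + a`, at `D` and `S⁻¹ D`. -/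
lemma frobInner_self_sq_le (ha : 0 < a) (D : Matrix R C ℝ) :
    frobInner D D ^ 2 ≤ (schattenFourPow D + a * frobInner D D) *
      frobInner D ((ridgeGram a D)⁻¹ * D) := by
  set S := ridgeGram a D with hS
  have hcancel : S * (S⁻¹ * D) = D := by
    rw [← Matrix.mul_assoc, Matrix.mul_nonsing_inv _ (isUnit_det_ridgeGram ha D), Matrix.one_mul]
  have hform (V V' : Matrix R C ℝ) :
      frobInner V (S * V') = frobInner (Dᵀ * V) (Dᵀ * V') + a * frobInner V V' := by
    rw [frobInner_mul_left, Matrix.transpose_transpose, ← Matrix.mul_assoc, hS, ridgeGram,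
      Matrix.add_mul, Matrix.smul_mul, Matrix.one_mul, map_add, map_smul, smul_eq_mul]
  have hcs := LinearMap.BilinForm.apply_mul_apply_le_of_forall_zero_le
    (frobInner.compl₂ (mulLeftLinearMap C ℝ S)) (fun V => by
      simp only [LinearMap.compl₂_apply, mulLeftLinearMap_apply, hform]
      exact add_nonneg (frobInner_self_nonneg _) (mul_nonneg ha.le (frobInner_self_nonneg _)))
    D (S⁻¹ * D)
  simp only [LinearMap.compl₂_apply, mulLeftLinearMap_apply, hcancel] at hcs
  have hswap : frobInner (S⁻¹ * D) (S * D) = frobInner D D := by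
    rw [frobInner_comm, frobInner_mul_left, ridgeGram_transpose, hcancel]
  rwa [hswap, ← sq, hform, ← frobInner_mul_transpose_mul_transpose, frobInner_comm (S⁻¹ * D)] at hcs

end DualCertificate

section SignFamily

variable {R C : Type*} [Fintype R] [Fintype C]

lemma frobInner_signMatrix_self (x : R × C → ℤˣ) :
    frobInner (signMatrix x) (signMatrix x) = Fintype.card R * Fintype.card C := by
  have hsq (u : ℤˣ) : ((u : ℤ) : ℝ) * ((u : ℤ) : ℝ) = 1 := by
    rcases Int.units_eq_one_or u with rfl | rfl <;> norm_num
  simp [frobInner_eq_sum, signMatrix, hsq]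

lemma frobInner_signMatrix_sub_self (x y : R × C → ℤˣ) :
    frobInner (signMatrix x - signMatrix y) (signMatrix x - signMatrix y) =
      4 * hammingDist x y := by
  have hsq (u v : ℤˣ) : (((u : ℤ) : ℝ) - ((v : ℤ) : ℝ)) * (((u : ℤ) : ℝ) - ((v : ℤ) : ℝ)) =
      if u ≠ v then 4 else 0 := by
    rcases Int.units_eq_one_or u with rfl | rfl <;> rcases Int.units_eq_one_or v with rfl | rfl <;>
      norm_num
  simp only [frobInner_eq_sum, Matrix.sub_apply, signMatrix, Matrix.of_apply, hsq]
  rw [← Fintype.sum_prod_type fun z : R × C => if x z ≠ y z then (4 : ℝ) else 0,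
    ← Finset.sum_filter, Finset.sum_const, nsmul_eq_mul, mul_comm, hammingDist]

lemma card_div_le_frobInner_ridgeGram_inv_mul [DecidableEq R] [Nonempty R] [Nonempty C]
    {x y : R × C → ℤˣ}
    (hx : schattenFourPow (signMatrix x) ≤ 32 * Fintype.card R * Fintype.card C ^ 2)
    (hy : schattenFourPow (signMatrix y) ≤ 32 * Fintype.card R * Fintype.card C ^ 2)
    (hxy : Fintype.card (R × C) ≤ 16 * hammingDist x y) :
    (Fintype.card R / 8256 : ℝ) ≤ frobInner (signMatrix x - signMatrix y)
      ((ridgeGram (Fintype.card C) (signMatrix x - signMatrix y))⁻¹ *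
        (signMatrix x - signMatrix y)) := by
  have hC : (0 : ℝ) < Fintype.card C := by exact_mod_cast Fintype.card_pos
  have hle : (hammingDist x y : ℝ) ≤ Fintype.card R * Fintype.card C := by
    exact_mod_cast Fintype.card_prod R C ▸ hammingDist_le_card_fintype (x := x) (y := y)
  have hge : (Fintype.card R * Fintype.card C : ℝ) ≤ 16 * hammingDist x y := by
    exact_mod_cast Fintype.card_prod R C ▸ hxy
  have hfour := schattenFourPow_sub_le (signMatrix x) (signMatrix y)
  have hcs := frobInner_self_sq_le hC (signMatrix x - signMatrix y)
  set D := signMatrix x - signMatrix y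
  set u := frobInner D ((ridgeGram (Fintype.card C) D)⁻¹ * D)
  have hDD : frobInner D D = 4 * hammingDist x y := frobInner_signMatrix_sub_self x y
  have hlow : (Fintype.card R * Fintype.card C / 4 : ℝ) ≤ frobInner D D := by linarith
  have hu : 0 < u := by
    have hpos : 0 < frobInner D D := (by positivity : 0 < _ / (4 : ℝ)).trans_le hlow
    refine pos_of_mul_pos_right ((pow_pos hpos 2).trans_le hcs) ?_
    exact add_nonneg (schattenFourPow_nonneg D) (mul_nonneg hC.le (frobInner_self_nonneg D))
  have hup : schattenFourPow D + Fintype.card C * frobInner D D ≤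
      516 * (Fintype.card R * Fintype.card C ^ 2) := by
    nlinarith [mul_le_mul_of_nonneg_left hle hC.le]
  have hmain : (Fintype.card R * Fintype.card C / 4 : ℝ) ^ 2 ≤
      516 * (Fintype.card R * Fintype.card C ^ 2) * u := by
    refine (pow_le_pow_left₀ (by positivity) hlow 2).trans (hcs.trans ?_)
    gcongr
  refine le_of_mul_le_mul_left ?_ (by positivity : (0 : ℝ) < Fintype.card R * Fintype.card C ^ 2)
  linarith

/-- The sign matrices with entries `±1`, `r` rows, and Schatten-4 norm of the expected order. -/
abbrev FlatSign (r : ℕ) (C : Type*) [Fintype C] : Type _ :=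
  {x : Fin r × C → ℤˣ // schattenFourPow (signMatrix x) ≤ 32 * r * Fintype.card C ^ 2}

lemma sqrt_div_le_frobInner_smul_signMatrix_sub {r : ℕ} (hr : 1 ≤ r) [Nonempty C]
    {x y : FlatSign r C} (hxy : r * Fintype.card C ≤ 16 * hammingDist x.1 y.1) :
    √r / 8256 ≤ frobInner ((√(r * Fintype.card C))⁻¹ • signMatrix x.1 -
        (√(r * Fintype.card C))⁻¹ • signMatrix y.1)
      (√(Fintype.card C) • ((ridgeGram (Fintype.card C) (signMatrix x.1 - signMatrix y.1))⁻¹ *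
        (signMatrix x.1 - signMatrix y.1))) := by
  have : Nonempty (Fin r) := ⟨⟨0, hr⟩⟩
  have hr0 : 0 < √(r : ℝ) := Real.sqrt_pos.2 (by exact_mod_cast hr)
  have hC0 : 0 < √(Fintype.card C : ℝ) := Real.sqrt_pos.2 (by exact_mod_cast Fintype.card_pos)
  have hcert := card_div_le_frobInner_ridgeGram_inv_mul (x := x.1) (y := y.1)
    (by simpa using x.2) (by simpa using y.2) (by simpa using hxy)
  rw [Fintype.card_fin] at hcert
  rw [← smul_sub, frobInner_smul_smul, Real.sqrt_mul (Nat.cast_nonneg r), mul_inv,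
    mul_assoc (√(r : ℝ))⁻¹, inv_mul_cancel₀ hC0.ne', mul_one, inv_mul_eq_div, le_div_iff₀ hr0,
    div_mul_eq_mul_div, Real.mul_self_sqrt (Nat.cast_nonneg r)]
  exact hcert

lemma mul_exp_le_card_flatSign [DecidableEq C] {r : ℕ} (hr : 1 ≤ r) (hrC : r ≤ Fintype.card C) :
    (2 : ℝ) ^ (-(r * Fintype.card C / 4 : ℝ)) * Fintype.card (Fin r × C → ℤˣ) *
      Real.exp (r * Fintype.card C * (Real.log 2 / 8)) ≤ Fintype.card (FlatSign r C) := by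
  have : Nonempty (Fin r) := ⟨⟨0, hr⟩⟩
  have hcard := mul_card_le_card_schattenFourPow_signMatrix_le (R := Fin r) (C := C) (by simpa)
  simp only [Fintype.card_fin] at hcard
  refine le_trans ?_ hcard
  have hlog : (2 : ℝ) ^ (-(r * Fintype.card C / 4 : ℝ)) *
      Real.exp (r * Fintype.card C * (Real.log 2 / 8)) =
      Real.exp (-(r * Fintype.card C * (Real.log 2 / 8))) := by
    rw [Real.rpow_def_of_pos two_pos, ← Real.exp_add]
    ring_nf
  have hrC1 : (1 : ℝ) ≤ r * Fintype.card C := by exact_mod_cast Nat.mul_pos hr (hr.trans hrC)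
  have hexp : Real.exp (-(r * Fintype.card C * (Real.log 2 / 8))) ≤ 15 / 16 := by
    rw [Real.exp_neg]
    refine inv_le_of_inv_le₀ (by norm_num) ?_
    have := Real.add_one_le_exp (r * Fintype.card C * (Real.log 2 / 8))
    nlinarith [Real.log_two_gt_d9]
  rw [mul_right_comm, hlog]
  gcongr

lemma isSeparatedFamily_signMatrix [DecidableEq C] {r : ℕ} (hr : 1 ≤ r)
    (hrC : r ≤ Fintype.card C) :
    IsSeparatedFamily r (√r / 8256) (r * Fintype.card C * (Real.log 2 / 8))
      (fun x : FlatSign r C => (√(r * Fintype.card C))⁻¹ • signMatrix x.1)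
      (fun x y => √(Fintype.card C) •
        ((ridgeGram (Fintype.card C) (signMatrix x.1 - signMatrix y.1))⁻¹ *
          (signMatrix x.1 - signMatrix y.1))) := by
  have : Nonempty C := Fintype.card_pos_iff.1 (hr.trans hrC)
  have hrC0 : (0 : ℝ) < r * Fintype.card C := by exact_mod_cast Nat.mul_pos hr (hr.trans hrC)
  have hcard := mul_exp_le_card_flatSign hr hrC
  refine ⟨?_, fun x => ?_, fun x y => ?_, fun x => ?_⟩
  · rw [← Fintype.card_pos_iff, ← Nat.cast_pos (α := ℝ)]
    exact lt_of_lt_of_le (by positivity) hcard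
  · rw [← sq_le_one_iff₀ (frobNorm_nonneg _), frobNorm_sq_eq_frobInner, frobInner_smul_smul,
      frobInner_signMatrix_self, Fintype.card_fin, ← mul_inv, Real.mul_self_sqrt hrC0.le,
      inv_mul_cancel₀ hrC0.ne']
  · rw [← Matrix.transpose_transpose (√(Fintype.card C : ℝ) • _)]
    exact (isContraction_sqrt_smul_ridgeGram_inv_mul (by exact_mod_cast Fintype.card_pos)
      _).transpose.isContractionThrough.transpose
  · refine le_trans ?_ hcard
    have hball := card_hammingDist_lt_mul_rpow_le (α := ℤˣ) (by simp) x.1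
    rw [← le_div_iff₀ (Real.rpow_pos_of_pos (by simp) _), div_eq_inv_mul,
      ← Real.rpow_neg (Nat.cast_nonneg _)] at hball
    gcongr
    refine le_trans ?_ (hball.trans_eq ?_)
    · gcongr
      refine Finset.card_le_card_of_injOn Subtype.val (fun y hy => ?_)
        Subtype.val_injective.injOn
      simp only [Finset.coe_filter, Finset.mem_univ, true_and, Set.mem_ofPred_eq,
        Fintype.card_prod, Fintype.card_fin] at hy ⊢
      by_contra! hxy
      exact (sqrt_div_le_frobInner_smul_signMatrix_sub hr hxy).not_gt hy
    · simp

end SignFamily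

section OneHotFamily

section ColumnBlocks

variable {I J : Type*} [DecidableEq J]

/-- The matrix whose `i`-th row is `u i` times the `f i`-th basis vector, so that its columns have
disjoint supports. -/
def columnBlocks (f : I → J) : (I → ℝ) →ₗ[ℝ] Matrix I J ℝ where
  toFun u := Matrix.of fun i => Pi.single (f i) (u i)
  map_add' u v := by ext i j; simp [Pi.single_add]
  map_smul' a u := by ext i j; simp [Pi.single_apply]

lemma columnBlocks_apply (f : I → J) (u : I → ℝ) (i : I) :
    columnBlocks f u i = Pi.single (f i) (u i) := rfl

variable [Fintype I] [Fintype J]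

lemma frobInner_columnBlocks (f : I → J) (u v : I → ℝ) :
    frobInner (columnBlocks f u) (columnBlocks f v) = u ⬝ᵥ v := by
  simp [frobInner_eq_sum, columnBlocks_apply, Pi.single_apply, dotProduct]

lemma isContraction_columnBlocks {f : I → J} {u : I → ℝ}
    (hu : ∀ j, ∑ i with f i = j, u i ^ 2 ≤ 1) : IsContraction (columnBlocks f u) := fun w => by
  refine (sq_le_sq₀ (l2norm_nonneg _) (l2norm_nonneg _)).1 ?_
  have hentry (i : I) : (columnBlocks f u *ᵥ w) i = u i * w (f i) := single_dotProduct _ _ _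
  calc l2norm (columnBlocks f u *ᵥ w) ^ 2 = ∑ i, u i ^ 2 * w (f i) ^ 2 := by
        simp only [l2norm_sq, dotProduct, hentry, ← sq, mul_pow]
    _ = ∑ j, ∑ i with f i = j, u i ^ 2 * w j ^ 2 := by
        rw [← Finset.sum_fiberwise _ f]
        refine Finset.sum_congr rfl fun j _ => Finset.sum_congr rfl fun i hi => ?_
        rw [(Finset.mem_filter.1 hi).2]
    _ ≤ ∑ j, w j ^ 2 := Finset.sum_le_sum fun j _ => by
        rw [← Finset.sum_mul]
        exact mul_le_of_le_one_left (sq_nonneg _) (hu j)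
    _ = l2norm w ^ 2 := by simp only [l2norm_sq, dotProduct, ← sq]

end ColumnBlocks

variable {K T : Type*} [DecidableEq T]

/-- The indicator function of the graph of `x`. -/
def graphIndicator (x : K → T) (l : K × T) : ℝ := if x l.1 = l.2 then 1 else 0

variable [Fintype T]

lemma sum_graphIndicator_sub_sq (x y : K → T) (k : K) :
    ∑ b, (graphIndicator x (k, b) - graphIndicator y (k, b)) ^ 2 =
      if x k ≠ y k then 2 else 0 := by
  have hsq (b : T) : (graphIndicator x (k, b) - graphIndicator y (k, b)) ^ 2 =
      (if x k = b then 1 else 0) + (if y k = b then 1 else 0) -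
        2 * if x k = b then if y k = b then 1 else 0 else 0 := by
    simp only [graphIndicator]
    split_ifs <;> norm_num
  simp only [hsq, Finset.sum_sub_distrib, Finset.sum_add_distrib, ← Finset.mul_sum,
    Finset.sum_ite_eq, Finset.mem_univ, if_true, ne_eq, ite_not, eq_comm (a := y k)]
  split_ifs <;> norm_num

variable [Fintype K]

lemma graphIndicator_dotProduct_self (x : K → T) :
    graphIndicator x ⬝ᵥ graphIndicator x = Fintype.card K := by
  simp [dotProduct, graphIndicator, Fintype.sum_prod_type]

lemma graphIndicator_sub_dotProduct_self (x y : K → T) :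
    (graphIndicator x - graphIndicator y) ⬝ᵥ (graphIndicator x - graphIndicator y) =
      2 * hammingDist x y := by
  simp only [dotProduct, Pi.sub_apply, ← sq, Fintype.sum_prod_type, sum_graphIndicator_sub_sq]
  rw [← Finset.sum_filter, Finset.sum_const, nsmul_eq_mul, mul_comm, hammingDist]

lemma card_rowSupport_columnBlocks_graphIndicator_le {J : Type*} [Fintype J] [DecidableEq J]
    (f : K × T → J) (a : ℝ) (x : K → T) :
    (rowSupport (a • columnBlocks f (graphIndicator x))).card ≤ Fintype.card K := by
  classical
  refine (Finset.card_le_card (t := Finset.univ.image fun k => (k, x k)) fun l hl => ?_).trans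
    Finset.card_image_le
  contrapose! hl
  have : x l.1 ≠ l.2 := fun h => hl (Finset.mem_image.2 ⟨l.1, Finset.mem_univ _, by rw [h]⟩)
  rw [mem_rowSupport, not_not]
  ext j
  simp [columnBlocks_apply, graphIndicator, this]

lemma isContraction_columnBlocks_graphIndicator_sub {R G : Type*} [Fintype R] [Fintype G]
    [DecidableEq R] {a : ℝ} (ha : 2 * a ^ 2 * Fintype.card G ≤ 1) (x y : R × G → T) :
    IsContraction (a • columnBlocks (fun l : (R × G) × T => l.1.1)
      (graphIndicator x - graphIndicator y)) := by
  rw [← map_smul]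
  refine isContraction_columnBlocks fun j => ?_
  calc ∑ l : (R × G) × T with l.1.1 = j, (a • (graphIndicator x - graphIndicator y)) l ^ 2 =
        a ^ 2 * ∑ g, if x (j, g) ≠ y (j, g) then 2 else 0 := by
        simp only [← sum_graphIndicator_sub_sq, Finset.sum_filter, Fintype.sum_prod_type,
          Pi.smul_apply, Pi.sub_apply, smul_eq_mul, mul_pow, Finset.mul_sum]
        rw [Fintype.sum_eq_single j fun i hi => by simp [hi]]
        simp
    _ ≤ a ^ 2 * ∑ _g : G, 2 := by
        gcongr
        split_ifs <;> norm_num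
    _ ≤ 1 := by
        rw [Finset.sum_const, Finset.card_univ, nsmul_eq_mul]
        linarith

lemma sqrt_div_le_frobInner_smul_columnBlocks_sub {r : ℕ} {G : Type*} [Fintype G] [Nonempty G]
    (hr : 1 ≤ r) {x y : Fin r × G → T} (hxy : r * Fintype.card G ≤ 16 * hammingDist x y) :
    √r / 16 ≤ frobInner
      ((√(r * Fintype.card G))⁻¹ • columnBlocks (fun l : (Fin r × G) × T => l.1.1)
          (graphIndicator x) -
        (√(r * Fintype.card G))⁻¹ • columnBlocks (fun l : (Fin r × G) × T => l.1.1)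
          (graphIndicator y))
      ((√r / 2 * (√(r * Fintype.card G))⁻¹) • columnBlocks (fun l : (Fin r × G) × T => l.1.1)
        (graphIndicator x - graphIndicator y)) := by
  have : (0 : ℝ) < r := by exact_mod_cast hr
  have : (0 : ℝ) < Fintype.card G := by exact_mod_cast Fintype.card_pos
  have hxy' : (r * Fintype.card G : ℝ) ≤ 16 * hammingDist x y := by exact_mod_cast hxy
  rw [← smul_sub, ← map_sub, frobInner_smul_smul, frobInner_columnBlocks,
    graphIndicator_sub_dotProduct_self]
  calc √r / 16 ≤ √r * (hammingDist x y / (r * Fintype.card G)) := by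
        rw [div_eq_mul_one_div]
        refine mul_le_mul_of_nonneg_left ?_ (Real.sqrt_nonneg _)
        rw [le_div_iff₀ (by positivity)]
        linarith
    _ = (√(r * Fintype.card G) ^ 2)⁻¹ * √r * hammingDist x y := by
        rw [Real.sq_sqrt (by positivity)]
        ring
    _ = _ := by ring

lemma isSeparatedFamily_columnBlocks_graphIndicator {r : ℕ} {G : Type*} [Fintype G] [Nonempty G]
    [DecidableEq G] (hr : 1 ≤ r) (hT : 2 ≤ Fintype.card T) :
    IsSeparatedFamily r (√r / 16) (r * Fintype.card G * (Real.log (Fintype.card T) / 4))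
      (fun x : Fin r × G → T => (√(r * Fintype.card G))⁻¹ •
        columnBlocks (fun l : (Fin r × G) × T => l.1.1) (graphIndicator x))
      (fun x y => (√r / 2 * (√(r * Fintype.card G))⁻¹) •
        columnBlocks (fun l : (Fin r × G) × T => l.1.1)
          (graphIndicator x - graphIndicator y)) := by
  have hr0 : (0 : ℝ) < r := by exact_mod_cast hr
  have : (0 : ℝ) < Fintype.card G := by exact_mod_cast Fintype.card_pos
  have hT0 : (0 : ℝ) < Fintype.card T := by exact_mod_cast two_pos.trans_le hT
  have : Nonempty T := Fintype.card_pos_iff.1 (by omega)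
  refine ⟨inferInstance, fun x => ?_, fun x y => ?_, fun x => ?_⟩
  · rw [← sq_le_one_iff₀ (frobNorm_nonneg _), frobNorm_sq_eq_frobInner, frobInner_smul_smul,
      frobInner_columnBlocks, graphIndicator_dotProduct_self, Fintype.card_prod, Fintype.card_fin,
      Nat.cast_mul, ← mul_inv, Real.mul_self_sqrt (by positivity), inv_mul_cancel₀ (by positivity)]
  · refine (isContraction_columnBlocks_graphIndicator_sub ?_ x y).isContractionThrough
    rw [mul_pow, div_pow, inv_pow, Real.sq_sqrt hr0.le, Real.sq_sqrt (by positivity)]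
    field_simp
    norm_num
  · have hball := card_hammingDist_lt_mul_rpow_le hT x
    have hexp : Real.exp (r * Fintype.card G * (Real.log (Fintype.card T) / 4)) =
        (Fintype.card T : ℝ) ^ (Fintype.card (Fin r × G) / 4 : ℝ) := by
      rw [Real.rpow_def_of_pos hT0, Fintype.card_prod, Fintype.card_fin]
      push_cast
      ring_nf
    rw [hexp]
    refine le_trans ?_ hball
    gcongr with y
    intro hsep
    by_contra! hxy
    exact hsep.not_ge (sqrt_div_le_frobInner_smul_columnBlocks_sub hr (by simpa using hxy))

end OneHotFamily

section PerturbationFamily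

variable {p m s r : ℕ} {δ L : ℝ}

/-- There are orthonormal frames `U` and `V` and a separated family of perturbations of the partial
isometry `U Vᵀ` that create neither rank above `r` nor more than `s` nonzero rows. -/
def HasPerturbationFamily (p m s r : ℕ) (δ L : ℝ) : Prop :=
  ∃ (ι : Type) (_ : Fintype ι) (U : Matrix (Fin p) (Fin r) ℝ) (V : Matrix (Fin m) (Fin r) ℝ)
    (F : ι → Matrix (Fin p) (Fin m) ℝ) (W : ι → ι → Matrix (Fin p) (Fin m) ℝ),
    Uᵀ * U = 1 ∧ Vᵀ * V = 1 ∧ IsSeparatedFamily r δ L F W ∧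
      ∀ (a b : ℝ) i,
        (a • (U * Vᵀ) + b • F i).rank ≤ r ∧ (rowSupport (a • (U * Vᵀ) + b • F i)).card ≤ s

lemma IsSeparatedFamily.hasPerturbationFamily_of_rows {ι : Type} [Fintype ι]
    {E : ι → Matrix (Fin r) (Fin m) ℝ} {W : ι → ι → Matrix (Fin r) (Fin m) ℝ}
    (h : IsSeparatedFamily r δ L E W) (hrp : r ≤ p) (hrm : r ≤ m) (hrs : r ≤ s) :
    HasPerturbationFamily p m s r δ L := by
  set U := embeddingMatrix (Fin.castLEEmb hrp)
  set V := embeddingMatrix (Fin.castLEEmb hrm)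
  have hU : Uᵀ * U = 1 := embeddingMatrix_transpose_mul_self _
  refine ⟨ι, inferInstance, U, V, _, _, hU, embeddingMatrix_transpose_mul_self _, h.mul_left hU,
    fun a b i => ?_⟩
  rw [← Matrix.mul_smul, ← Matrix.mul_smul, ← Matrix.mul_add]
  refine ⟨(Matrix.rank_mul_le_left _ _).trans (by simpa using U.rank_le_width), ?_⟩
  calc _ ≤ (rowSupport U).card := Finset.card_le_card (rowSupport_mul_subset _ _)
    _ ≤ r := by simpa using card_rowSupport_embeddingMatrix_le (Fin.castLEEmb hrp)
    _ ≤ s := hrs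

lemma IsSeparatedFamily.hasPerturbationFamily_of_columns {ι : Type} [Fintype ι] {R : Type*}
    [Fintype R] {E : ι → Matrix R (Fin r) ℝ} {W : ι → ι → Matrix R (Fin r) ℝ}
    (h : IsSeparatedFamily r δ L E W) {k : ℕ} (hE : ∀ i, (rowSupport (E i)).card ≤ k)
    (hrp : r ≤ p) (hrm : r ≤ m) (hrks : r + k ≤ s) (φ : R ↪ Fin p) :
    HasPerturbationFamily p m s r δ L := by
  classical
  set U := embeddingMatrix (Fin.castLEEmb hrp)
  set V := embeddingMatrix (Fin.castLEEmb hrm)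
  have hV : Vᵀ * V = 1 := embeddingMatrix_transpose_mul_self _
  refine ⟨ι, inferInstance, U, V, _, _, embeddingMatrix_transpose_mul_self _, hV,
    (h.mul_left (embeddingMatrix_transpose_mul_self φ)).mul_transpose hV, fun a b i => ?_⟩
  rw [← Matrix.smul_mul, ← Matrix.smul_mul, ← Matrix.add_mul]
  refine ⟨(Matrix.rank_mul_le_right _ _).trans (by simpa using Vᵀ.rank_le_height), ?_⟩
  calc _ ≤ (rowSupport (a • U + b • (embeddingMatrix φ * E i))).card :=
        Finset.card_le_card (rowSupport_mul_subset _ _)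
    _ ≤ (rowSupport U).card + (rowSupport (embeddingMatrix φ * E i)).card :=
        card_rowSupport_smul_add_smul_le _ _ _ _
    _ ≤ r + k := add_le_add
        (by simpa using card_rowSupport_embeddingMatrix_le (Fin.castLEEmb hrp))
        ((card_rowSupport_embeddingMatrix_mul_le φ _).trans (hE i))
    _ ≤ s := hrks

lemma hasPerturbationFamily_signMatrix_rows (hr : 1 ≤ r) (hrs : r ≤ s) (hrm : r ≤ m)
    (hsp : s ≤ p) : HasPerturbationFamily p m s r (√r / 8256) (r * m * (Real.log 2 / 8)) := by
  have h := (isSeparatedFamily_signMatrix (C := Fin m) hr (by simpa)).hasPerturbationFamily_of_rows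
    (hrs.trans hsp) hrm hrs
  rwa [Fintype.card_fin] at h

lemma hasPerturbationFamily_signMatrix_columns (hr : 1 ≤ r) (hrs : 2 * r ≤ s) (hrm : r ≤ m)
    (hsp : s ≤ p) :
    HasPerturbationFamily p m s r (√r / 8256) (r * (s - r : ℕ) * (Real.log 2 / 8)) := by
  have hrsr : r ≤ Fintype.card (Fin (s - r)) := by
    rw [Fintype.card_fin]
    omega
  have h := (isSeparatedFamily_signMatrix hr hrsr).transpose.hasPerturbationFamily_of_columns
    (s := s) (fun _ => Finset.card_le_univ _) (by omega) hrm (by rw [Fintype.card_fin]; omega)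
    (Fin.castLEEmb (by omega : s - r ≤ p))
  rwa [Fintype.card_fin] at h

lemma hasPerturbationFamily_columnBlocks (hr : 1 ≤ r) (hrs : 2 * r ≤ s) (hrm : r ≤ m)
    (hsp : 2 * s ≤ p) :
    HasPerturbationFamily p m s r (√r / 8256)
      (r * ((s - r) / r : ℕ) * (Real.log (p / s : ℕ) / 4)) := by
  have hg : 1 ≤ (s - r) / r := (Nat.one_le_div_iff hr).2 (by omega)
  have ht : 2 ≤ p / s := (Nat.le_div_iff_mul_le (by omega)).2 hsp
  have hrg : r * ((s - r) / r) ≤ s - r := Nat.mul_div_le _ _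
  have : Nonempty (Fin ((s - r) / r)) := ⟨⟨0, hg⟩⟩
  have h := isSeparatedFamily_columnBlocks_graphIndicator (G := Fin ((s - r) / r))
    (T := Fin (p / s)) hr (by simpa)
  rw [Fintype.card_fin, Fintype.card_fin] at h
  have hcard : Fintype.card ((Fin r × Fin ((s - r) / r)) × Fin (p / s)) ≤
      Fintype.card (Fin p) := by
    simp only [Fintype.card_prod, Fintype.card_fin]
    exact (Nat.mul_le_mul_right _ (hrg.trans (Nat.sub_le s r))).trans (Nat.mul_div_le p s)
  obtain ⟨φ⟩ := Function.Embedding.nonempty_of_card_le hcard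
  refine (h.mono (div_le_div_of_nonneg_left (Real.sqrt_nonneg _) (by norm_num)
    (by norm_num))).hasPerturbationFamily_of_columns (k := s - r) (fun x => ?_) (by omega) hrm
    (by omega) φ
  exact (card_rowSupport_columnBlocks_graphIndicator_le _ _ x).trans (by simpa using hrg)

lemma le_four_mul_mul_div (hr : 1 ≤ r) (hrs : 2 * r ≤ s) : s ≤ 4 * (r * ((s - r) / r)) := by
  have hmod := Nat.div_add_mod (s - r) r
  have hlt := Nat.mod_lt (s - r) hr
  have hle := Nat.le_mul_of_pos_right r ((Nat.one_le_div_iff hr).2 (by omega : r ≤ s - r))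
  omega

lemma log_exp_one_mul_div_le (hs : 0 < s) (hsp : 2 * s ≤ p) :
    Real.log (Real.exp 1 * p / s) ≤ 4 * Real.log (p / s : ℕ) := by
  have ht2 : (2 : ℝ) ≤ (p / s : ℕ) := by
    exact_mod_cast (Nat.le_div_iff_mul_le hs).2 hsp
  have hpt : (p : ℝ) ≤ s * ((p / s : ℕ) + 1) := by
    exact_mod_cast (Nat.lt_mul_div_succ p hs).le
  set t : ℝ := ((p / s : ℕ) : ℝ)
  have hs0 : (0 : ℝ) < s := by exact_mod_cast hs
  have hp0 : (0 : ℝ) < p := by exact_mod_cast hs.trans_le (by omega : s ≤ p)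
  rw [show 4 * Real.log t = Real.log (t ^ 4) by rw [Real.log_pow]; norm_num]
  refine Real.log_le_log (by positivity) ((div_le_iff₀ hs0).2 ?_)
  calc Real.exp 1 * p ≤ 3 * (s * (t + 1)) := by
        gcongr
        exact Real.exp_one_lt_three.le
    _ ≤ 2 ^ 3 * t * s := by nlinarith
    _ ≤ t ^ 3 * t * s := by gcongr
    _ = t ^ 4 * s := by ring

lemma log_exp_one_mul_div_nonneg (hs : 0 < s) (hsp : s ≤ p) :
    0 ≤ Real.log (Real.exp 1 * p / s) := by
  have hs0 : (0 : ℝ) < s := by exact_mod_cast hs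
  refine Real.log_nonneg ((one_le_div hs0).2 ?_)
  exact (Nat.cast_le.2 hsp).trans
    (le_mul_of_one_le_left (Nat.cast_nonneg p) (Real.one_le_exp zero_le_one))

lemma mul_log_exp_one_mul_div_le_two_mul (hs : 0 < s) (hp : 0 < p) (hps : p ≤ 2 * s) :
    s * Real.log (Real.exp 1 * p / s) ≤ 2 * s := by
  have hs0 : (0 : ℝ) < s := by exact_mod_cast hs
  have hp0 : (0 : ℝ) < p := by exact_mod_cast hp
  have hps' : (p : ℝ) / s ≤ 2 := (div_le_iff₀ hs0).2 (by exact_mod_cast hps)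
  rw [mul_div_assoc, Real.log_mul (Real.exp_pos 1).ne' (by positivity), Real.log_exp]
  have := Real.log_le_sub_one_of_pos (div_pos hp0 hs0)
  nlinarith

lemma mul_le_mul_sub_mul_log_two (hrs : 2 * r ≤ s) :
    (r * s : ℝ) ≤ 24 * (r * (s - r : ℕ) * (Real.log 2 / 8)) := by
  have hrs' : (s : ℝ) ≤ 2 * (s - r : ℕ) := by exact_mod_cast (by omega : s ≤ 2 * (s - r))
  have hlog : 2 / 3 ≤ Real.log 2 := by linarith [Real.log_two_gt_d9]
  calc (r * s : ℝ) ≤ r * (2 * (s - r : ℕ)) := by gcongr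
    _ = 24 * (r * (s - r : ℕ) * (2 / 3 / 8)) := by ring
    _ ≤ _ := by gcongr

lemma exists_hasPerturbationFamily_of_mul_log (hr : 1 ≤ r) (hrs : 2 * r ≤ s) (hrm : r ≤ m)
    (hsp : s ≤ p) : ∃ L, s * Real.log (Real.exp 1 * p / s) ≤ 64 * L ∧
      HasPerturbationFamily p m s r (√r / 8256) L := by
  rcases le_total (2 * s) p with h2 | h2
  · refine ⟨_, ?_, hasPerturbationFamily_columnBlocks hr hrs hrm h2⟩
    have hlog := log_exp_one_mul_div_le (by omega) h2
    have : 0 ≤ Real.log (p / s : ℕ) := Real.log_natCast_nonneg _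
    have hs : (s : ℝ) ≤ 4 * (r * ((s - r) / r : ℕ)) := by
      exact_mod_cast le_four_mul_mul_div hr hrs
    calc s * Real.log (Real.exp 1 * p / s) ≤ s * (4 * Real.log (p / s : ℕ)) := by gcongr
      _ ≤ 4 * (r * ((s - r) / r : ℕ)) * (4 * Real.log (p / s : ℕ)) := by gcongr
      _ = _ := by ring
  · refine ⟨_, ?_, hasPerturbationFamily_signMatrix_columns hr hrs hrm hsp⟩
    have hlog := mul_log_exp_one_mul_div_le_two_mul (by omega) (by omega) h2
    have hL := mul_le_mul_sub_mul_log_two hrs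
    have hs : (s : ℝ) ≤ r * s := by exact_mod_cast Nat.le_mul_of_pos_left s hr
    have : (0 : ℝ) ≤ s := Nat.cast_nonneg s
    linarith

lemma exists_hasPerturbationFamily (hr : 1 ≤ r) (hrs : 2 * r ≤ s) (hrm : r ≤ m) (hsp : s ≤ p) :
    ∃ L, 1 / 16 ≤ L ∧ r * (s + m) + s * Real.log (Real.exp 1 * p / s) ≤ 100 * L ∧
      HasPerturbationFamily p m s r (√r / 8256) L := by
  have hr1 : (1 : ℝ) ≤ r := by exact_mod_cast hr
  have hrm' : (r : ℝ) ≤ m := by exact_mod_cast hrm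
  obtain ⟨L₃, hL₃, h₃⟩ := exists_hasPerturbationFamily_of_mul_log hr hrs hrm hsp
  have h₁ := hasPerturbationFamily_signMatrix_columns hr hrs hrm hsp
  have h₂ := hasPerturbationFamily_signMatrix_rows hr (by omega) hrm hsp
  have hL₁ := mul_le_mul_sub_mul_log_two hrs
  have hrm1 : (1 : ℝ) ≤ r * m := by nlinarith
  have hL₂ : (r * m : ℝ) ≤ 12 * (r * m * (Real.log 2 / 8)) := by nlinarith [Real.log_two_gt_d9]
  set L₁ : ℝ := r * (s - r : ℕ) * (Real.log 2 / 8)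
  set L₂ : ℝ := r * m * (Real.log 2 / 8)
  have hmax₁ : L₁ ≤ max (max L₁ L₂) L₃ := (le_max_left _ _).trans (le_max_left _ _)
  have hmax₂ : L₂ ≤ max (max L₁ L₂) L₃ := (le_max_right _ _).trans (le_max_left _ _)
  have hmax₃ : L₃ ≤ max (max L₁ L₂) L₃ := le_max_right _ _
  exact ⟨max (max L₁ L₂) L₃, by linarith, by linarith, max_rec' _ (max_rec' _ h₁ h₂) h₃⟩

lemma HasPerturbationFamily.ofReal_le_iSup_lintegral {n : ℕ}
    (h : HasPerturbationFamily p m s r δ L) (hδ : 0 ≤ δ) (hL : 1 / 16 ≤ L) (hr : 1 ≤ r)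
    (hrm : r ≤ m) (hrs : r ≤ s) (hsp : s ≤ p) {d γ σ e q : ℝ} (hd : 0 < d) (hγ : 1 < γ)
    (hσ : 0 < σ) (he : 0 ≤ e) (hed : e ≤ (γ - 1) / 4 * d) {X : Matrix (Fin n) (Fin p) ℝ}
    (heX : (kappaPlus X s * e) ^ 2 ≤ σ ^ 2 * (L / 2)) (hq : 1 ≤ q)
    {Ahat : Matrix (Fin n) (Fin m) ℝ → Matrix (Fin p) (Fin m) ℝ} (hA : Measurable Ahat) :
    ENNReal.ofReal ((e * δ / 2 / (r : ℝ) ^ (1 - 1 / q)) ^ 2 / 65) ≤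
      ⨆ A ∈ {A : Matrix (Fin p) (Fin m) ℝ | memTheta A s r d γ},
        ∫⁻ Y, ENNReal.ofReal (schattenNorm (Ahat Y - A) q ^ 2)
          ∂((gaussianMatrix n m (Real.toNNReal (σ ^ 2))).map fun Z => X * A + Z) := by
  obtain ⟨ι, _, U, V, F, W, hU, hV, hF, hUVF⟩ := h
  refine hF.ofReal_le_iSup_lintegral (A₀ := ((1 + γ) / 2 * d) • (U * Vᵀ)) hL hδ he hr
    (hrs.trans hsp) hrm hq (Real.toNNReal_pos.2 (by positivity)).ne' (fun i => ?_) (fun i => ?_) hA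
  · have hγd := mul_pos (sub_pos.2 hγ) hd
    exact memTheta_smul_add_smul hU hV (isContraction_of_frobNorm_le_one (hF.frobNorm_le_one i))
      hr hd he (by linarith) (by linarith) (hUVF _ _ i).1 (hUVF _ _ i).2
  · rw [Real.coe_toNNReal _ (sq_nonneg σ)]
    refine (pow_le_pow_left₀ (frobNorm_nonneg _) ?_ 2).trans heX
    have hcard := (hUVF 0 1 i).2
    rw [zero_smul, zero_add, one_smul] at hcard
    rw [Matrix.mul_smul, frobNorm_smul, abs_of_nonneg he, mul_comm e]
    refine mul_le_mul_of_nonneg_right ((frobNorm_mul_le_kappaPlus X hsp hcard).trans ?_) he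
    exact mul_le_of_le_one_right (kappaPlus_nonneg X s) (hF.frobNorm_le_one i)

end PerturbationFamily

lemma sqrt_div_rpow_sq {x : ℝ} (hx : 0 < x) (q : ℝ) :
    (√x / x ^ (1 - 1 / q)) ^ 2 = x ^ (2 / q - 1) := by
  rw [div_pow, Real.sq_sqrt hx.le, ← Real.rpow_mul_natCast hx.le, div_eq_mul_inv,
    ← Real.rpow_neg hx.le, mul_comm, ← Real.rpow_add_one hx.ne']
  congr 1
  push_cast
  ring

lemma ofReal_mul_rpow_le_iSup_lintegral {n m p s r : ℕ} (hr : 1 ≤ r) (hrs : 2 * r ≤ s)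
    (hrm : r ≤ m) (hsp : s ≤ p) {d γ σ T q : ℝ} (hd : 0 < d) (hγ : 1 < γ) (hσ : 0 < σ)
    (hT : 0 ≤ T) (hTd : T ≤ ((γ - 1) / 4 * d) ^ 2) {X : Matrix (Fin n) (Fin p) ℝ}
    (hTX : 200 * (kappaPlus X s ^ 2 * T) ≤
      σ ^ 2 * (r * (s + m) + s * Real.log (Real.exp 1 * p / s)))
    (hq : 1 ≤ q) {Ahat : Matrix (Fin n) (Fin m) ℝ → Matrix (Fin p) (Fin m) ℝ}
    (hA : Measurable Ahat) :
    ENNReal.ofReal ((1 / 8256) ^ 2 / 260 * (T * (r : ℝ) ^ (2 / q - 1))) ≤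
      ⨆ A ∈ {A : Matrix (Fin p) (Fin m) ℝ | memTheta A s r d γ},
        ∫⁻ Y, ENNReal.ofReal (schattenNorm (Ahat Y - A) q ^ 2)
          ∂((gaussianMatrix n m (Real.toNNReal (σ ^ 2))).map fun Z => X * A + Z) := by
  obtain ⟨L, hL, hle, hfam⟩ := exists_hasPerturbationFamily hr hrs hrm hsp
  have hsqrt : √T ≤ (γ - 1) / 4 * d :=
    Real.sqrt_le_iff.2 ⟨mul_nonneg (by linarith) hd.le, hTd⟩
  have heX : (kappaPlus X s * √T) ^ 2 ≤ σ ^ 2 * (L / 2) := by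
    rw [mul_pow, Real.sq_sqrt hT]
    linarith [mul_le_mul_of_nonneg_left hle (sq_nonneg σ)]
  refine le_of_eq_of_le (congrArg ENNReal.ofReal ?_) (hfam.ofReal_le_iSup_lintegral (by positivity)
    hL hr hrm (by omega) hsp hd hγ hσ (Real.sqrt_nonneg T) hsqrt heX hq hA)
  calc (1 / 8256) ^ 2 / 260 * (T * (r : ℝ) ^ (2 / q - 1)) =
        (1 / 8256) ^ 2 / 260 * (√T ^ 2 * (√r / (r : ℝ) ^ (1 - 1 / q)) ^ 2) := by
        rw [Real.sq_sqrt hT, sqrt_div_rpow_sq (by exact_mod_cast hr)]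
    _ = _ := by ring

lemma sq_mul_min_rpow_eq {x σ : ℝ} (hx : 0 < x) (hσ : σ ≠ 0) (q d y z w : ℝ) :
    σ ^ 2 * min (x ^ (2 / q - 1) * d ^ 2 / σ ^ 2) (x ^ (2 / q) * y + x ^ (2 / q - 1) * z * w) =
      min (d ^ 2) (σ ^ 2 * (x * y + z * w)) * x ^ (2 / q - 1) := by
  have hxq : x ^ (2 / q) = x ^ (2 / q - 1) * x := by
    rw [← Real.rpow_add_one hx.ne', sub_add_cancel]
  rw [mul_min_of_nonneg _ _ (sq_nonneg σ), min_mul_of_nonneg _ _ (by positivity),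
    mul_div_cancel₀ _ (pow_ne_zero 2 hσ), hxq]
  ring_nf

theorem stmt9_general :
    ∀ γ b : ℝ, 1 < γ → 0 < b →
    ∃ c : ℝ, 0 < c ∧
    ∀ (n m p s r : ℕ) (d σ : ℝ) (X : Matrix (Fin n) (Fin p) ℝ),
      0 < σ → 0 < d → 1 ≤ r → 2 * r ≤ s → r ≤ m → s ≤ p → kappaPlus X s ≤ b →
      ∀ q : ℝ, 1 ≤ q →
      ∀ Ahat : Matrix (Fin n) (Fin m) ℝ → Matrix (Fin p) (Fin m) ℝ, Measurable Ahat →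
      ENNReal.ofReal (c * σ ^ 2 *
          min ((r : ℝ) ^ (2 / q - 1) * d ^ 2 / σ ^ 2)
            ((r : ℝ) ^ (2 / q) * ((s : ℝ) + m)
              + (r : ℝ) ^ (2 / q - 1) * s * Real.log (Real.exp 1 * p / s))) ≤
        ⨆ A ∈ {A : Matrix (Fin p) (Fin m) ℝ | memTheta A s r d γ},
          ∫⁻ Y, ENNReal.ofReal (schattenNorm (Ahat Y - A) q ^ 2)
            ∂((gaussianMatrix n m (Real.toNNReal (σ ^ 2))).map (fun Z => X * A + Z)) := by
  intro γ b hγ hb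
  have : 0 < γ - 1 := sub_pos.2 hγ
  refine ⟨(1 / 8256) ^ 2 / 260 * min (((γ - 1) / 4) ^ 2) (1 / (200 * b ^ 2)), by positivity, ?_⟩
  intro n m p s r d σ X hσ hd hr hrs hrm hsp hX q hq Ahat hA
  rw [mul_assoc, sq_mul_min_rpow_eq (by exact_mod_cast hr) hσ.ne', mul_assoc, ← mul_assoc (min _ _)]
  have hlog := log_exp_one_mul_div_nonneg (by omega) hsp
  refine ofReal_mul_rpow_le_iSup_lintegral hr hrs hrm hsp hd hγ hσ (by positivity) ?_ ?_ hq hA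
  · rw [mul_pow]
    exact mul_le_mul (min_le_left _ _) (min_le_left _ _) (by positivity) (by positivity)
  set S : ℝ := r * (s + m) + s * Real.log (Real.exp 1 * p / s)
  calc _ ≤ 200 * (b ^ 2 * (1 / (200 * b ^ 2) * (σ ^ 2 * S))) := by
        have := kappaPlus_nonneg X s
        gcongr
        · exact min_le_right _ _
        · exact min_le_right _ _
    _ = σ ^ 2 * S := by field_simp

/-- Minimax lower bound. For every γ and every value b = κ₊(2s) there is a
constant c > 0 depending only on them such that for the Gaussian model Y = XA + Z with
K⁻¹ ≤ κ₋(2s) ≤ κ₊(2s) ≤ K and s ≥ 2r, for every q ∈ [1,2] and every measurable estimator Â,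
sup_{A ∈ Θ(s,r,d,γ)} E‖Â − A‖_{S_q}² ≥ c σ² {(r^{2/q−1} d²/σ²) ∧ [r^{2/q}(s+m) + r^{2/q−1} s log(ep/s)]}. -/
theorem stmt9 :
    ∀ γ b : ℝ, 1 < γ → 0 < b →
    ∃ c : ℝ, 0 < c ∧
    ∀ (n m p s r : ℕ) (d σ K : ℝ) (X : Matrix (Fin n) (Fin p) ℝ),
      0 < σ → 0 < d → 1 ≤ r → 2 * r ≤ s → r ≤ m → s ≤ p →
      1 < K → K⁻¹ ≤ kappaMinus X (2 * s) → kappaMinus X (2 * s) ≤ kappaPlus X (2 * s) →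
      kappaPlus X (2 * s) ≤ K →
      kappaPlus X (2 * s) = b →
      ∀ q ∈ Set.Icc (1 : ℝ) 2,
      ∀ Ahat : Matrix (Fin n) (Fin m) ℝ → Matrix (Fin p) (Fin m) ℝ, Measurable Ahat →
      ENNReal.ofReal (c * σ ^ 2 *
          min ((r : ℝ) ^ (2 / q - 1) * d ^ 2 / σ ^ 2)
            ((r : ℝ) ^ (2 / q) * ((s : ℝ) + m)
              + (r : ℝ) ^ (2 / q - 1) * s * Real.log (Real.exp 1 * p / s))) ≤
        ⨆ A ∈ {A : Matrix (Fin p) (Fin m) ℝ | memTheta A s r d γ},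
          ∫⁻ Y, ENNReal.ofReal (schattenNorm (Ahat Y - A) q ^ 2)
            ∂((gaussianMatrix n m (Real.toNNReal (σ ^ 2))).map (fun Z => X * A + Z)) := by
  intro γ b hγ hb
  obtain ⟨c, hc, h⟩ := stmt9_general γ b hγ hb
  refine ⟨c, hc, fun n m p s r d σ K X hσ hd hr hrs hrm hsp hK hKX _ _ hX q hq => ?_⟩
  have h2s : 2 * s ≤ p := le_of_kappaMinus_pos ((inv_pos.2 (zero_lt_one.trans hK)).trans_le hKX)
  have hXs : kappaPlus X s ≤ b := (kappaPlus_mono X (by omega) h2s).trans_eq hX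
  exact h n m p s r d σ X hσ hd hr hrs hrm hsp hXs q hq.1

end
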